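/- Let 1 ≤ n ≤ d, let C be a compact, n-rectifiable subset of ℝ^d with H_n(C) > 0, and let A be any packing bound function. Then the limit as r → ∞ of A(rC)/H_n(rC) exists and equals δ_{A,n}; in particular it depends only on A and n, not on the choice of C or d. -/

import Mathlib

open scoped Pointwise
open MeasureTheory Bornology Filter

/-- The unit cube `[0,1]^n` in `ℝ^n`. -/
def unitCube (n : ℕ) : Set (EuclideanSpace ℝ (Fin n)) :=
  {x | ∀ i, x i ∈ Set.Icc (0 : ℝ) 1}

/-- A packing bound function: an assignment of a nonnegative real number to every bounded
Borel subset of every Euclidean space, satisfying the sphere bound, Lipschitz, union,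
and mesh axioms. -/
structure PackingBoundFunction where
  toFun : ∀ d : ℕ, Set (EuclideanSpace ℝ (Fin d)) → ℝ
  nonneg : ∀ (d : ℕ) (C : Set (EuclideanSpace ℝ (Fin d))),
    IsBounded C → MeasurableSet C → 0 ≤ toFun d C
  sphere_bound : ∀ (d : ℕ) (C : Set (EuclideanSpace ℝ (Fin d))),
    IsBounded C → MeasurableSet C → C.Nonempty →
    (∃ z, C ⊆ Metric.ball z 1) → toFun d C = 1
  lipschitz : ∀ (d d' : ℕ) (C : Set (EuclideanSpace ℝ (Fin d)))
    (C' : Set (EuclideanSpace ℝ (Fin d'))),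
    IsBounded C → MeasurableSet C → IsBounded C' → MeasurableSet C' →
    (∃ ψ : EuclideanSpace ℝ (Fin d) → EuclideanSpace ℝ (Fin d'),
      (∀ x ∈ C, ψ x ∈ C') ∧ ∀ x ∈ C, ∀ y ∈ C, dist x y ≤ dist (ψ x) (ψ y)) →
    toFun d C ≤ toFun d' C'
  union : ∀ (d : ℕ) (C C' : Set (EuclideanSpace ℝ (Fin d))),
    IsBounded C → MeasurableSet C → IsBounded C' → MeasurableSet C' →
    (∀ x ∈ C, ∀ x' ∈ C', 2 ≤ dist x x') →
    toFun d (C ∪ C') = toFun d C + toFun d C'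
  mesh : ∀ (ε : ℝ), 0 < ε → ∀ (d : ℕ) (C C' : Set (EuclideanSpace ℝ (Fin d))),
    IsBounded C → MeasurableSet C → IsBounded C' → MeasurableSet C' →
    C ⊆ Metric.thickening ε C' →
    toFun d ((1 / (1 + ε)) • C) ≤ toFun d C'

/-- The Euclidean limit `δ_{A,n}` of a packing bound function: the limit of
`A(2^k·[0,1]^n)/2^{kn}` as `k → ∞` (expressed as a `limsup`, which coincides with the
limit since the latter exists). -/
noncomputable def pbfDensity (A : PackingBoundFunction) (n : ℕ) : ℝ :=
  Filter.limsup (fun k : ℕ => A.toFun n ((2 : ℝ) ^ k • unitCube n) / 2 ^ (k * n)) Filter.atTop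

/-- Normalized `n`-dimensional Hausdorff measure on `ℝ^d`, normalized (by the factor
`L_n(B_1^n)/2^n`) so that it agrees with Lebesgue measure on `ℝ^n`. -/
noncomputable def normHausdorff (n d : ℕ) : Measure (EuclideanSpace ℝ (Fin d)) :=
  (volume (Metric.ball (0 : EuclideanSpace ℝ (Fin n)) 1) / 2 ^ n) •
    (MeasureTheory.Measure.hausdorffMeasure (n : ℝ) : Measure (EuclideanSpace ℝ (Fin d)))

/-!
On compact subsets of `ℝ^n` the lower and upper limits of `A(rC) / r^n` both equal `δ_{A,n}` times
the volume, since such sets are exhausted by grids of cubes. For a Lipschitz image `f(S)` with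
`S ⊆ ℝ^n` compact, the mesh axiom shows that changing `C` outside the image of a part of `S` of
small volume has little effect on these limits. Linearizing `f` where its derivative is injective
yields finitely many disjoint compact pieces of `f(S)`, each `L`-bi-Lipschitz to a compact subset of
`ℝ^n` with `L` close to `1`. The remaining points of `S` have an image of zero `H_n`-measure and
zero upper density, as near them `f` is dominated by linear maps of small determinant. Letting
`L → 1` gives the limit `δ_{A,n} H_n(C)`. That `H_n` is Lebesgue measure on `ℝ^n` is the
isodiametric inequality, proved by Steiner symmetrization.
-/

local notation "𝔼" n:max => EuclideanSpace ℝ (Fin n)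

/-! ### The isodiametric inequality -/

section Steiner

variable {n : ℕ} {i j : Fin n} {S : Set (Fin n → ℝ)} {R : ℝ}

/-- The length of the intersection of `S` with the line through `x` parallel to the `i`-th axis. -/
noncomputable def sliceLength (i : Fin n) (S : Set (Fin n → ℝ)) (x : Fin n → ℝ) : ENNReal :=
  volume {t : ℝ | Function.update x i t ∈ S}

/-- The Steiner symmetral of `S` with respect to the hyperplane `x i = 0`: every slice parallel to
the `i`-th axis is replaced by the centred open interval of the same length. -/
def steinerSymm (i : Fin n) (S : Set (Fin n → ℝ)) : Set (Fin n → ℝ) :=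
  {x | ENNReal.ofReal (2 * |x i|) < sliceLength i S x}

/-- Invariance of `S` under the reflection `x j ↦ -x j`. -/
def IsReflectionInvariant (j : Fin n) (S : Set (Fin n → ℝ)) : Prop :=
  ∀ x ∈ S, Function.update x j (-x j) ∈ S

lemma sliceLength_update (x : Fin n → ℝ) (t : ℝ) :
    sliceLength i S (Function.update x i t) = sliceLength i S x := by
  simp only [sliceLength, Function.update_idem]

lemma sliceLength_eq_lmarginal (hS : MeasurableSet S) :
    sliceLength i S = lmarginal (fun _ : Fin n => (volume : Measure ℝ)) {i} (S.indicator 1) := by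
  rw [lmarginal_singleton]
  ext x
  exact (lintegral_indicator_one (measurable_update x hS)).symm

lemma measurableSet_steinerSymm (hS : MeasurableSet S) : MeasurableSet (steinerSymm i S) := by
  refine measurableSet_lt (by fun_prop) ?_
  rw [sliceLength_eq_lmarginal hS]
  exact Measurable.lmarginal _ (measurable_one.indicator hS)

lemma volume_two_mul_abs_lt (L : ENNReal) :
    volume {t : ℝ | ENNReal.ofReal (2 * |t|) < L} = L := by
  cases L with
  | top => simp only [ENNReal.ofReal_lt_top, Set.ofPred_true, Real.volume_univ]
  | coe L =>
    have : {t : ℝ | ENNReal.ofReal (2 * |t|) < L} = Set.Ioo (-(L / 2 : ℝ)) (L / 2) := by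
      ext t
      rw [Set.mem_ofPred_eq, Set.mem_Ioo, ← abs_lt,
        ENNReal.ofReal_lt_iff_lt_toReal (by positivity) ENNReal.coe_ne_top, ENNReal.coe_toReal,
        lt_div_iff₀' two_pos]
    rw [this, Real.volume_Ioo, sub_neg_eq_add, add_halves, ENNReal.ofReal_coe_nnreal]

lemma volume_steinerSymm (hS : MeasurableSet S) : volume (steinerSymm i S) = volume S := by
  have hS' : MeasurableSet (steinerSymm i S) := measurableSet_steinerSymm hS
  rw [← lintegral_indicator_one hS', ← lintegral_indicator_one hS]
  refine lintegral_eq_of_lmarginal_eq {i} (measurable_one.indicator hS')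
    (measurable_one.indicator hS) ?_
  rw [← sliceLength_eq_lmarginal hS, ← sliceLength_eq_lmarginal hS']
  ext x
  rw [sliceLength]
  simp only [steinerSymm, Set.mem_ofPred_eq, sliceLength_update, Function.update_self,
    volume_two_mul_abs_lt]

lemma volume_add_volume_le_of_abs_sub_le {P Q : Set ℝ} {s : ℝ} (hP : P.Nonempty)
    (hQ : Q.Nonempty) (h : ∀ p ∈ P, ∀ q ∈ Q, |p - q| ≤ s) :
    volume P + volume Q ≤ ENNReal.ofReal (2 * s) := by
  have hlow : ∀ p ∈ P, ∀ q ∈ Q, p - s ≤ q := fun p hp q hq => by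
    linarith [(abs_le.1 (h p hp q hq)).2]
  have hupp : ∀ p ∈ P, ∀ q ∈ Q, q ≤ p + s := fun p hp q hq => by
    linarith [(abs_le.1 (h p hp q hq)).1]
  obtain ⟨p₀, hp₀⟩ := hP
  have hsub : P ⊆ Set.Icc (sSup Q - s) (sInf Q + s) := fun p hp =>
    ⟨by linarith [csSup_le hQ (hupp p hp)], by linarith [le_csInf hQ (hlow p hp)]⟩
  have hQsub : Q ⊆ Set.Icc (sInf Q) (sSup Q) :=
    subset_Icc_csInf_csSup ⟨_, hlow p₀ hp₀⟩ ⟨_, hupp p₀ hp₀⟩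
  have hQle : sInf Q ≤ sSup Q := Set.nonempty_Icc.1 (hQ.mono hQsub)
  have hPle := Set.nonempty_Icc.1 (⟨p₀, hsub hp₀⟩ : (Set.Icc _ _).Nonempty)
  calc volume P + volume Q
      ≤ ENNReal.ofReal (sInf Q + s - (sSup Q - s)) + ENNReal.ofReal (sSup Q - sInf Q) := by
        rw [← Real.volume_Icc, ← Real.volume_Icc]
        gcongr
    _ = ENNReal.ofReal (2 * s) := by
        rw [← ENNReal.ofReal_add (by linarith) (by linarith)]
        ring_nf

lemma sum_sq_sub_le_of_mem_steinerSymm (hR : ∀ x ∈ S, ∀ y ∈ S, ∑ j, (x j - y j) ^ 2 ≤ R) :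
    ∀ x ∈ steinerSymm i S, ∀ y ∈ steinerSymm i S, ∑ j, (x j - y j) ^ 2 ≤ R := by
  intro x hx y hy
  obtain ⟨p, hp, q, hq, hpq⟩ : ∃ p, Function.update x i p ∈ S ∧
      ∃ q, Function.update y i q ∈ S ∧ |x i| + |y i| ≤ |p - q| := by
    by_contra! hfar
    refine (ENNReal.add_lt_add hx hy).not_ge ?_
    rw [← ENNReal.ofReal_add (by positivity) (by positivity), ← mul_add]
    exact volume_add_volume_le_of_abs_sub_le
      (nonempty_of_measure_ne_zero (ne_bot_of_gt hx))
      (nonempty_of_measure_ne_zero (ne_bot_of_gt hy)) fun p hp q hq => (hfar p hp q hq).le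
  refine le_trans (Finset.sum_le_sum fun j _ => ?_) (hR _ hp _ hq)
  obtain rfl | hj := eq_or_ne j i
  · simpa only [Function.update_self] using sq_le_sq.2 ((abs_sub _ _).trans hpq)
  · simp only [Function.update_of_ne hj, le_refl]

lemma isReflectionInvariant_steinerSymm_self : IsReflectionInvariant i (steinerSymm i S) := by
  intro x hx
  simpa only [steinerSymm, Set.mem_ofPred_eq, sliceLength_update, Function.update_self, abs_neg]
    using hx

lemma IsReflectionInvariant.steinerSymm (hS : IsReflectionInvariant j S) (hij : i ≠ j) :
    IsReflectionInvariant j (steinerSymm i S) := by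
  intro x hx
  rw [_root_.steinerSymm, Set.mem_ofPred_eq, Function.update_of_ne hij]
  refine hx.trans_le (measure_mono fun t ht => ?_)
  have hmem := hS _ ht
  rwa [Function.update_of_ne hij.symm, Function.update_comm hij] at hmem

lemma neg_mem_of_isReflectionInvariant (h : ∀ j, IsReflectionInvariant j S) {x : Fin n → ℝ}
    (hx : x ∈ S) : -x ∈ S := by
  have key (T : Finset (Fin n)) : T.piecewise (-x) x ∈ S := by
    induction T using Finset.induction_on with
    | empty => rwa [Finset.piecewise_empty]
    | insert i T hi ih =>
      have hmem := h i _ ih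
      rwa [Finset.piecewise_eq_of_notMem _ _ _ hi, ← Pi.neg_apply x i,
        ← Finset.piecewise_insert] at hmem
  simpa only [Finset.piecewise_univ] using key Finset.univ

lemma exists_isReflectionInvariant_volume_eq (hS : MeasurableSet S)
    (hR : ∀ x ∈ S, ∀ y ∈ S, ∑ j, (x j - y j) ^ 2 ≤ R) (T : Finset (Fin n)) :
    ∃ S' : Set (Fin n → ℝ), MeasurableSet S' ∧ volume S' = volume S ∧
      (∀ x ∈ S', ∀ y ∈ S', ∑ j, (x j - y j) ^ 2 ≤ R) ∧ ∀ j ∈ T, IsReflectionInvariant j S' := by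
  induction T using Finset.induction_on with
  | empty => exact ⟨S, hS, rfl, hR, fun j hj => absurd hj (Finset.notMem_empty j)⟩
  | insert i T hi ih =>
    obtain ⟨S', hmeas, hvol, hdiam, hinv⟩ := ih
    refine ⟨steinerSymm i S', measurableSet_steinerSymm hmeas,
      (volume_steinerSymm hmeas).trans hvol, sum_sq_sub_le_of_mem_steinerSymm hdiam, ?_⟩
    intro j hj
    obtain rfl | hjT := Finset.mem_insert.1 hj
    · exact isReflectionInvariant_steinerSymm_self
    · exact (hinv j hjT).steinerSymm (ne_of_mem_of_not_mem hjT hi).symm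

lemma volume_le_of_sum_sq_sub_le (hS : MeasurableSet S)
    (hR : ∀ x ∈ S, ∀ y ∈ S, ∑ j, (x j - y j) ^ 2 ≤ R) :
    volume S ≤ volume {x : Fin n → ℝ | 4 * ∑ j, x j ^ 2 ≤ R} := by
  obtain ⟨S', -, hvol, hdiam, hinv⟩ := exists_isReflectionInvariant_volume_eq hS hR Finset.univ
  rw [← hvol]
  refine measure_mono fun x hx => ?_
  refine le_of_eq_of_le ?_ (hdiam x hx (-x)
    (neg_mem_of_isReflectionInvariant (fun j => hinv j (Finset.mem_univ j)) hx))
  rw [Finset.mul_sum]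
  exact Finset.sum_congr rfl fun j _ => by rw [Pi.neg_apply]; ring

end Steiner

theorem isodiametric {n : ℕ} {S : Set (𝔼 n)} (hS : MeasurableSet S) {R : ℝ} (hR₀ : 0 ≤ R)
    (hR : ∀ x ∈ S, ∀ y ∈ S, dist x y ≤ R) :
    volume S ≤ volume (Metric.closedBall (0 : 𝔼 n) (R / 2)) := by
  have hmp := (EuclideanSpace.volume_preserving_symm_measurableEquiv_toLp (Fin n)).symm
  rw [MeasurableEquiv.symm_symm] at hmp
  rw [← hmp.measure_preimage hS.nullMeasurableSet,
    ← hmp.measure_preimage Metric.isClosed_closedBall.measurableSet.nullMeasurableSet]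
  refine (volume_le_of_sum_sq_sub_le (R := R ^ 2) (MeasurableEquiv.measurable _ hS)
    fun x hx y hy => ?_).trans (measure_mono fun x hx => ?_)
  · have hxy := hR _ hx _ hy
    rw [EuclideanSpace.dist_eq, Real.sqrt_le_left hR₀] at hxy
    simpa [Real.dist_eq, sq_abs] using hxy
  · rw [Set.mem_preimage, mem_closedBall_zero_iff, EuclideanSpace.norm_eq,
      Real.sqrt_le_left (by positivity)]
    rw [Set.mem_ofPred_eq] at hx
    simp only [MeasurableEquiv.coe_toLp, Real.norm_eq_abs, sq_abs]
    linarith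

/-! ### The normalized Hausdorff measure -/

section NormHausdorff

open Metric

variable {n d : ℕ}

/-- The normalizing factor `L_n(B_1^n) / 2^n` in `normHausdorff`. -/
noncomputable def hausdorffFactor (n : ℕ) : ENNReal := volume (ball (0 : 𝔼 n) 1) / 2 ^ n

lemma normHausdorff_apply (s : Set (𝔼 d)) :
    normHausdorff n d s = hausdorffFactor n * Measure.hausdorffMeasure (n : ℝ) s := rfl

lemma hausdorffFactor_ne_zero : hausdorffFactor n ≠ 0 :=
  (ENNReal.div_pos (measure_ball_pos _ _ one_pos).ne' (by simp)).ne'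

lemma hausdorffFactor_ne_top : hausdorffFactor n ≠ ⊤ :=
  (ENNReal.div_lt_top measure_ball_lt_top.ne (by simp)).ne

lemma volume_closedBall_eq_hausdorffFactor_mul (x : 𝔼 n) {r : ℝ} (hr : 0 ≤ r) :
    volume (closedBall x r) = hausdorffFactor n * ENNReal.ofReal (2 * r) ^ n := by
  rw [Measure.addHaar_closedBall _ _ hr, finrank_euclideanSpace_fin, hausdorffFactor,
    ENNReal.ofReal_mul zero_le_two, mul_pow, ENNReal.ofReal_ofNat, ← mul_assoc,
    ENNReal.div_mul_cancel (by simp) (by simp), ENNReal.ofReal_pow hr, mul_comm]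

lemma volume_le_hausdorffFactor_mul_ediam_pow {s : Set (𝔼 n)} (hs : ediam s ≠ ⊤) :
    volume s ≤ hausdorffFactor n * ediam s ^ n := by
  have hiso : volume (closure s) ≤ volume (closedBall (0 : 𝔼 n) ((ediam s).toReal / 2)) := by
    refine isodiametric isClosed_closure.measurableSet ENNReal.toReal_nonneg fun x hx y hy => ?_
    rw [← ENNReal.ofReal_le_iff_le_toReal hs, ← edist_dist, ← ediam_closure]
    exact edist_le_ediam_of_mem hx hy
  rw [volume_closedBall_eq_hausdorffFactor_mul _ (by positivity), mul_div_cancel₀ _ two_ne_zero,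
    ENNReal.ofReal_toReal hs] at hiso
  exact (measure_mono subset_closure).trans hiso

lemma volume_le_normHausdorff : (volume : Measure (𝔼 n)) ≤ normHausdorff n n := by
  have hle : (hausdorffFactor n)⁻¹ • (volume : Measure (𝔼 n)) ≤ μH[(n : ℝ)] := by
    refine Measure.le_hausdorffMeasure _ _ 1 one_pos fun s hs => ?_
    rw [Measure.smul_apply, smul_eq_mul, ENNReal.rpow_natCast,
      ENNReal.inv_mul_le_iff hausdorffFactor_ne_zero hausdorffFactor_ne_top]
    exact volume_le_hausdorffFactor_mul_ediam_pow (hs.trans_lt ENNReal.one_lt_top).ne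
  intro s
  rw [normHausdorff_apply, ← ENNReal.inv_mul_le_iff hausdorffFactor_ne_zero hausdorffFactor_ne_top]
  exact hle s

lemma exists_small_closedBall_covering (s : Set (𝔼 n)) {ε : ℝ} (hε : 0 < ε) :
    ∃ (t : Set (𝔼 n)) (r : 𝔼 n → ℝ), t.Countable ∧ (∀ x ∈ t, r x ∈ Set.Ioo 0 ε) ∧
      (s ⊆ ⋃ x ∈ t, closedBall x (r x)) ∧
      ∑' x : t, volume (closedBall (x : 𝔼 n) (r x)) ≤ volume s + ENNReal.ofReal ε := by
  obtain ⟨t, r, ht, -, hr, hcov, hsum⟩ := Besicovitch.exists_closedBall_covering_tsum_measure_le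
    volume (ENNReal.ofReal_pos.2 hε).ne' (fun _ => Set.Ioo (0 : ℝ) ε) s fun x _ δ hδ => by
      obtain ⟨ρ, hρ⟩ := exists_between (lt_min hε hδ)
      exact ⟨ρ, ⟨hρ.1, hρ.2.trans_le (min_le_left _ _)⟩, hρ.1, hρ.2.trans_le (min_le_right _ _)⟩
  exact ⟨t, r, ht, hr, hcov, hsum⟩

lemma ediam_closedBall_le_ofReal (x : 𝔼 n) {r : ℝ} (hr : 0 ≤ r) :
    ediam (closedBall x r) ≤ ENNReal.ofReal (2 * r) := by
  rw [← closedEBall_ofReal hr, ENNReal.ofReal_mul zero_le_two, ENNReal.ofReal_ofNat]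
  exact ediam_closedEBall_le

lemma hausdorffFactor_mul_ediam_closedBall_pow_le (x : 𝔼 n) {r : ℝ} (hr : 0 ≤ r) :
    hausdorffFactor n * ediam (closedBall x r) ^ n ≤ volume (closedBall x r) := by
  rw [volume_closedBall_eq_hausdorffFactor_mul x hr]
  gcongr
  exact ediam_closedBall_le_ofReal x hr

lemma normHausdorff_le_volume : normHausdorff n n ≤ (volume : Measure (𝔼 n)) := by
  intro s
  obtain ⟨ε, -, hε, hε₀⟩ := exists_seq_strictAnti_tendsto (0 : ℝ)
  choose t r ht hr hcov hsum using fun k => exists_small_closedBall_covering s (hε k)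
  have hcount (k : ℕ) : Countable (t k) := (ht k).to_subtype
  have hlim₀ : Tendsto (fun k => ENNReal.ofReal (2 * ε k)) atTop (nhds 0) := by
    simpa using ENNReal.tendsto_ofReal (hε₀.const_mul 2)
  have hH := Measure.hausdorffMeasure_le_liminf_tsum (n : ℝ) s _ hlim₀
    (fun k (x : t k) => closedBall (x : 𝔼 n) (r k x))
    (.of_forall fun k x => (ediam_closedBall_le_ofReal _ (hr k x x.2).1.le).trans
      (by gcongr; exact (hr k x x.2).2.le))
    (.of_forall fun k => by simpa only [Set.biUnion_eq_iUnion] using hcov k)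
  have hlim : Tendsto (fun k => volume s + ENNReal.ofReal (ε k)) atTop (nhds (volume s)) := by
    simpa using (ENNReal.tendsto_ofReal hε₀).const_add (volume s)
  calc normHausdorff n n s
      ≤ hausdorffFactor n * liminf (fun k => ∑' x : t k,
          ediam (closedBall (x : 𝔼 n) (r k x)) ^ (n : ℝ)) atTop := by
        rw [normHausdorff_apply]
        gcongr
    _ = liminf (fun k => hausdorffFactor n * ∑' x : t k,
          ediam (closedBall (x : 𝔼 n) (r k x)) ^ (n : ℝ)) atTop :=
        (ENNReal.liminf_const_mul_of_ne_top hausdorffFactor_ne_top).symm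
    _ ≤ liminf (fun k => volume s + ENNReal.ofReal (ε k)) atTop := by
        refine liminf_le_liminf (.of_forall fun k => le_trans ?_ (hsum k))
        simp only [← ENNReal.tsum_mul_left, ENNReal.rpow_natCast]
        exact ENNReal.tsum_le_tsum fun x =>
          hausdorffFactor_mul_ediam_closedBall_pow_le _ (hr k x x.2).1.le
    _ = volume s := hlim.liminf_eq

theorem normHausdorff_self (n : ℕ) : normHausdorff n n = volume :=
  le_antisymm normHausdorff_le_volume volume_le_normHausdorff

lemma normHausdorff_image_le {m : ℕ} {f : 𝔼 m → 𝔼 d} {K : NNReal} {s : Set (𝔼 m)}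
    (hf : LipschitzOnWith K f s) :
    normHausdorff n d (f '' s) ≤ (K : ENNReal) ^ n * normHausdorff n m s := by
  rw [normHausdorff_apply, normHausdorff_apply, mul_left_comm, ← ENNReal.rpow_natCast]
  gcongr
  exact hf.hausdorffMeasure_image_le n.cast_nonneg

lemma normHausdorff_smul (s : Set (𝔼 d)) {r : ℝ} (hr : 0 < r) :
    normHausdorff n d (r • s) = ENNReal.ofReal (r ^ n) * normHausdorff n d s := by
  rw [normHausdorff_apply, normHausdorff_apply,
    Measure.hausdorffMeasure_smul₀ n.cast_nonneg hr.ne', mul_left_comm]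
  congr 1
  rw [NNReal.rpow_natCast, ENNReal.ofReal_pow hr.le, ENNReal.smul_def, smul_eq_mul,
    ENNReal.coe_pow, ← enorm_eq_nnnorm, Real.enorm_eq_ofReal hr.le]

end NormHausdorff

/-! ### Basic properties of packing bound functions -/

section VerticalLift

variable {d : ℕ}

/-- The isometric embedding of `ℝ^d` onto the hyperplane of `ℝ^(d+1)` at height `t`. -/
noncomputable def verticalLift (t : ℝ) (x : 𝔼 d) : 𝔼 (d + 1) :=
  WithLp.toLp 2 (Fin.cons t x.ofLp)

lemma dist_verticalLift (s t : ℝ) (x y : 𝔼 d) :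
    dist (verticalLift s x) (verticalLift t y) = √((s - t) ^ 2 + dist x y ^ 2) := by
  rw [EuclideanSpace.dist_eq, EuclideanSpace.dist_eq, Fin.sum_univ_succ,
    Real.sq_sqrt (by positivity)]
  simp only [verticalLift, Fin.cons_zero, Fin.cons_succ, Real.dist_eq, sq_abs]

lemma isometry_verticalLift (t : ℝ) : Isometry (verticalLift (d := d) t) :=
  Isometry.of_dist_eq fun x y => by
    rw [dist_verticalLift, sub_self, zero_pow two_ne_zero, zero_add, Real.sqrt_sq dist_nonneg]

lemma dist_le_dist_verticalLift (s t : ℝ) (x y : 𝔼 d) :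
    dist x y ≤ dist (verticalLift s x) (verticalLift t y) := by
  rw [dist_verticalLift]
  exact Real.le_sqrt_of_sq_le (le_add_of_nonneg_left (sq_nonneg _))

lemma abs_sub_le_dist_verticalLift (s t : ℝ) (x y : 𝔼 d) :
    |s - t| ≤ dist (verticalLift s x) (verticalLift t y) := by
  rw [dist_verticalLift]
  exact Real.abs_le_sqrt (le_add_of_nonneg_right (sq_nonneg _))

end VerticalLift

/-- The sets on which the axioms of a packing bound function are stated. -/
structure IsBoundedBorel {d : ℕ} (C : Set (𝔼 d)) : Prop where
  isBounded : IsBounded C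
  measurableSet : MeasurableSet C

namespace IsBoundedBorel

variable {d : ℕ} {C C' : Set (𝔼 d)}

lemma of_isCompact (hC : IsCompact C) : IsBoundedBorel C :=
  ⟨hC.isBounded, hC.measurableSet⟩

lemma union (hC : IsBoundedBorel C) (hC' : IsBoundedBorel C') : IsBoundedBorel (C ∪ C') :=
  ⟨hC.1.union hC'.1, hC.2.union hC'.2⟩

lemma inter (hC : IsBoundedBorel C) (hC' : MeasurableSet C') : IsBoundedBorel (C ∩ C') :=
  ⟨hC.1.subset Set.inter_subset_left, hC.2.inter hC'⟩

lemma diff (hC : IsBoundedBorel C) (hC' : MeasurableSet C') : IsBoundedBorel (C \ C') :=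
  hC.inter hC'.compl

lemma biUnion {ι : Type*} {T : Finset ι} {P : ι → Set (𝔼 d)}
    (hP : ∀ i ∈ T, IsBoundedBorel (P i)) : IsBoundedBorel (⋃ i ∈ T, P i) :=
  ⟨(isBounded_biUnion_finset T).2 fun i hi => (hP i hi).1,
    T.measurableSet_biUnion fun i hi => (hP i hi).2⟩

lemma smul (hC : IsBoundedBorel C) (r : ℝ) : IsBoundedBorel (r • C) :=
  ⟨hC.1.smul₀ r, hC.2.const_smul₀ r⟩

lemma image_verticalLift (hC : IsBoundedBorel C) (t : ℝ) : IsBoundedBorel (verticalLift t '' C) :=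
  ⟨(isometry_verticalLift t).lipschitz.isBounded_image hC.1,
    (isometry_verticalLift t).isClosedEmbedding.measurableEmbedding.measurableSet_image.2 hC.2⟩

end IsBoundedBorel

namespace PackingBoundFunction

variable (A : PackingBoundFunction) {d : ℕ} {C C' : Set (𝔼 d)}

lemma mono (hC : IsBoundedBorel C) (hC' : IsBoundedBorel C') (h : C ⊆ C') :
    A.toFun d C ≤ A.toFun d C' :=
  A.lipschitz d d C C' hC.1 hC.2 hC'.1 hC'.2 ⟨id, h, fun _ _ _ _ => le_rfl⟩

lemma apply_empty : A.toFun d ∅ = 0 := by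
  have h := A.union d ∅ ∅ isBounded_empty .empty isBounded_empty .empty fun _ hx => hx.elim
  rwa [Set.union_self, left_eq_add] at h

lemma apply_image_verticalLift_le (hC : IsBoundedBorel C) (t : ℝ) :
    A.toFun (d + 1) (verticalLift t '' C) ≤ A.toFun d C := by
  have hC' := hC.image_verticalLift t
  have hinv := Function.leftInverse_invFun (isometry_verticalLift (d := d) t).injective
  refine A.lipschitz _ _ _ _ hC'.1 hC'.2 hC.1 hC.2 ⟨Function.invFun (verticalLift t), ?_, ?_⟩
  · rintro _ ⟨x, hx, rfl⟩
    rwa [hinv x]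
  · rintro _ ⟨x, -, rfl⟩ _ ⟨y, -, rfl⟩
    rw [hinv x, hinv y, (isometry_verticalLift t).dist_eq]

-- Lifting `C` and `C'` to heights `0` and `2` of `ℝ^(d+1)` makes them far apart and does not
-- decrease distances.
lemma union_le (hC : IsBoundedBorel C) (hC' : IsBoundedBorel C') :
    A.toFun d (C ∪ C') ≤ A.toFun d C + A.toFun d C' := by
  classical
  have hC₀ := hC.image_verticalLift 0
  have hC₂ := hC'.image_verticalLift 2
  calc A.toFun d (C ∪ C')
      ≤ A.toFun (d + 1) (verticalLift 0 '' C ∪ verticalLift 2 '' C') := by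
        refine A.lipschitz _ _ _ _ (hC.union hC').1 (hC.union hC').2 (hC₀.union hC₂).1
          (hC₀.union hC₂).2 ⟨fun x => verticalLift (if x ∈ C then 0 else 2) x, fun x hx => ?_,
            fun x _ y _ => dist_le_dist_verticalLift _ _ x y⟩
        by_cases hxC : x ∈ C
        · exact Or.inl ⟨x, hxC, by simp only [if_pos hxC]⟩
        · exact Or.inr ⟨x, hx.resolve_left hxC, by simp only [if_neg hxC]⟩
    _ = A.toFun (d + 1) (verticalLift 0 '' C) + A.toFun (d + 1) (verticalLift 2 '' C') := by
        refine A.union _ _ _ hC₀.1 hC₀.2 hC₂.1 hC₂.2 ?_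
        rintro _ ⟨x, -, rfl⟩ _ ⟨y, -, rfl⟩
        simpa using abs_sub_le_dist_verticalLift 0 2 x y
    _ ≤ A.toFun d C + A.toFun d C' :=
        add_le_add (A.apply_image_verticalLift_le hC 0) (A.apply_image_verticalLift_le hC' 2)

lemma biUnion_le {ι : Type*} {T : Finset ι} {P : ι → Set (𝔼 d)}
    (hP : ∀ i ∈ T, IsBoundedBorel (P i)) :
    A.toFun d (⋃ i ∈ T, P i) ≤ ∑ i ∈ T, A.toFun d (P i) := by
  classical
  induction T using Finset.induction_on with
  | empty => simp [A.apply_empty]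
  | insert i T hi ih =>
    rw [Finset.forall_mem_insert] at hP
    rw [Finset.set_biUnion_insert, Finset.sum_insert hi]
    exact (A.union_le hP.1 (.biUnion hP.2)).trans (add_le_add_right (ih hP.2) _)

lemma le_one_of_subset_ball (hC : IsBoundedBorel C) {z : 𝔼 d} (hz : C ⊆ Metric.ball z 1) :
    A.toFun d C ≤ 1 := by
  obtain rfl | hne := C.eq_empty_or_nonempty
  · exact A.apply_empty.trans_le zero_le_one
  · exact (A.sphere_bound d C hC.1 hC.2 hne ⟨z, hz⟩).le

lemma le_card_of_subset_biUnion_ball {ι : Type*} {T : Finset ι} {z : ι → 𝔼 d}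
    (hC : IsBoundedBorel C) (hz : C ⊆ ⋃ i ∈ T, Metric.ball (z i) 1) :
    A.toFun d C ≤ T.card := by
  have hball (i : ι) : IsBoundedBorel (C ∩ Metric.ball (z i) 1) :=
    hC.inter Metric.isOpen_ball.measurableSet
  calc A.toFun d C = A.toFun d (⋃ i ∈ T, C ∩ Metric.ball (z i) 1) := by
        rw [← Set.inter_iUnion₂, Set.inter_eq_left.2 hz]
    _ ≤ ∑ i ∈ T, A.toFun d (C ∩ Metric.ball (z i) 1) := A.biUnion_le fun i _ => hball i
    _ ≤ ∑ _i ∈ T, 1 :=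
        Finset.sum_le_sum fun i _ => A.le_one_of_subset_ball (hball i) Set.inter_subset_right
    _ = T.card := by rw [Finset.sum_const, nsmul_one]

lemma apply_smul_image_le {m : ℕ} {g : 𝔼 m → 𝔼 d} {K : NNReal} {X : Set (𝔼 m)}
    (hg : LipschitzOnWith K g X) (hX : IsBoundedBorel X) (hgX : IsBoundedBorel (g '' X))
    (hK : K ≠ 0) {r : ℝ} (hr : 0 < r) :
    A.toFun d (r • (g '' X)) ≤ A.toFun m ((K * r) • X) := by
  have hKr : (0 : ℝ) < K * r := by positivity
  choose! p hpX hgp using fun y (hy : y ∈ g '' X) => hy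
  refine A.lipschitz _ _ _ _ (hgX.smul r).1 (hgX.smul r).2 (hX.smul (K * r)).1
    (hX.smul (K * r)).2 ⟨fun y => (K * r) • p (r⁻¹ • y), ?_, ?_⟩
  · rintro _ ⟨y, hy, rfl⟩
    simpa only [inv_smul_smul₀ hr.ne'] using Set.smul_mem_smul_set (hpX y hy)
  · rintro _ ⟨y, hy, rfl⟩ _ ⟨z, hz, rfl⟩
    simp only [inv_smul_smul₀ hr.ne', dist_smul₀, Real.norm_of_nonneg hr.le,
      Real.norm_of_nonneg hKr.le]
    calc r * dist y z = r * dist (g (p y)) (g (p z)) := by rw [hgp y hy, hgp z hz]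
      _ ≤ r * (K * dist (p y) (p z)) := by
        gcongr
        exact hg.dist_le_mul _ (hpX y hy) _ (hpX z hz)
      _ = K * r * dist (p y) (p z) := by ring

end PackingBoundFunction

/-! ### Upper and lower densities -/

section ENNRealLimits

variable {ι : Type*} {l : Filter ι} {u v : ι → ENNReal}

lemma ennreal_le_add_of_forall_gt {a b c : ENNReal} (h : ∀ b' > b, ∀ c' > c, a ≤ b' + c') :
    a ≤ b + c := by
  refine ENNReal.le_of_forall_pos_le_add fun ε hε hbc => ?_
  obtain ⟨hb, hc⟩ := ENNReal.add_lt_top.1 hbc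
  have hε₂ : (ε / 2 : ENNReal) ≠ 0 := ENNReal.half_pos (by exact_mod_cast hε.ne') |>.ne'
  calc a ≤ b + ε / 2 + (c + ε / 2) :=
        h _ (ENNReal.lt_add_right hb.ne hε₂) _ (ENNReal.lt_add_right hc.ne hε₂)
    _ = b + c + ε := by rw [add_add_add_comm, ENNReal.add_halves]

lemma ennreal_limsup_add_le : limsup (u + v) l ≤ limsup u l + limsup v l :=
  ennreal_le_add_of_forall_gt fun _ hb _ hc => limsup_le_of_le (h :=
    (eventually_lt_of_limsup_lt hb).mp ((eventually_lt_of_limsup_lt hc).mono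
      fun _ hv hu => add_le_add hu.le hv.le))

lemma ennreal_liminf_add_le : liminf (u + v) l ≤ liminf u l + limsup v l :=
  ennreal_le_add_of_forall_gt fun _ hb _ hc => liminf_le_of_frequently_le
    ((frequently_lt_of_liminf_lt (h := hb)).mp ((eventually_lt_of_limsup_lt hc).mono
      fun _ hv hu => add_le_add hu.le hv.le))

lemma ennreal_le_liminf_add : liminf u l + liminf v l ≤ liminf (u + v) l := by
  obtain hu | hu := eq_or_ne (liminf u l) 0
  · rw [hu, zero_add]
    exact liminf_le_liminf (.of_forall fun i => le_add_self)
  obtain hv | hv := eq_or_ne (liminf v l) 0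
  · rw [hv, add_zero]
    exact liminf_le_liminf (.of_forall fun i => le_self_add)
  refine le_of_forall_lt fun a ha => ?_
  obtain ⟨b, hb, c, hc, habc⟩ := ENNReal.exists_lt_add_of_lt_add ha hu hv
  exact habc.trans_le (le_liminf_of_le (h := (eventually_lt_of_lt_liminf hb).mp
    ((eventually_lt_of_lt_liminf hc).mono fun _ hv hu => add_le_add hu.le hv.le)))

lemma map_mul_left_atTop {t : ℝ} (ht : 0 < t) : map (t * ·) atTop = atTop :=
  (OrderIso.mulLeft₀ t ht).map_atTop

end ENNRealLimits

namespace PackingBoundFunction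

variable (A : PackingBoundFunction) {n d : ℕ} {C C' : Set (𝔼 d)}

/-- The rescaled bound `A(rC) / r^n`, whose limit as `r → ∞` is to be determined. -/
noncomputable def ratio (n : ℕ) (C : Set (𝔼 d)) (r : ℝ) : ENNReal :=
  ENNReal.ofReal (A.toFun d (r • C) / r ^ n)

/-- The upper `n`-dimensional density of `A` on `C`: the limit superior of `A(rC) / r^n`. -/
noncomputable def upperDensity (n : ℕ) (C : Set (𝔼 d)) : ENNReal :=
  limsup (A.ratio n C) atTop

/-- The lower `n`-dimensional density of `A` on `C`: the limit inferior of `A(rC) / r^n`. -/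
noncomputable def lowerDensity (n : ℕ) (C : Set (𝔼 d)) : ENNReal :=
  liminf (A.ratio n C) atTop

lemma upperDensity_le_of_eventually {m : ℕ} {X : Set (𝔼 m)} {t : ℝ} (ht : 0 < t)
    {e : ℝ → ENNReal}
    (h : ∀ᶠ r in atTop, A.ratio n C r ≤ ENNReal.ofReal t ^ n * A.ratio n X (t * r) + e r) :
    A.upperDensity n C ≤ ENNReal.ofReal t ^ n * A.upperDensity n X + limsup e atTop := by
  have hscale : limsup (fun r => A.ratio n X (t * r)) atTop = A.upperDensity n X := by
    conv_rhs => rw [upperDensity, ← map_mul_left_atTop ht]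
    rfl
  rw [← hscale, ← ENNReal.limsup_const_mul_of_ne_top (ENNReal.pow_ne_top ENNReal.ofReal_ne_top)]
  exact (limsup_le_limsup h).trans ennreal_limsup_add_le

lemma lowerDensity_le_of_eventually {m : ℕ} {X : Set (𝔼 m)} {t : ℝ} (ht : 0 < t)
    {e : ℝ → ENNReal}
    (h : ∀ᶠ r in atTop, A.ratio n C r ≤ ENNReal.ofReal t ^ n * A.ratio n X (t * r) + e r) :
    A.lowerDensity n C ≤ ENNReal.ofReal t ^ n * A.lowerDensity n X + limsup e atTop := by
  have hscale : liminf (fun r => A.ratio n X (t * r)) atTop = A.lowerDensity n X := by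
    conv_rhs => rw [lowerDensity, ← map_mul_left_atTop ht]
    rfl
  rw [← hscale, ← ENNReal.liminf_const_mul_of_ne_top (ENNReal.pow_ne_top ENNReal.ofReal_ne_top)]
  exact (liminf_le_liminf h).trans ennreal_liminf_add_le

lemma ratio_union_le (hC : IsBoundedBorel C) (hC' : IsBoundedBorel C') {r : ℝ} (hr : 0 < r) :
    A.ratio n (C ∪ C') r ≤ A.ratio n C r + A.ratio n C' r := by
  rw [ratio, Set.smul_set_union]
  refine (ENNReal.ofReal_le_ofReal ?_).trans ENNReal.ofReal_add_le
  rw [← add_div]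
  gcongr
  exact A.union_le (hC.smul r) (hC'.smul r)

lemma upperDensity_union_le (hC : IsBoundedBorel C) (hC' : IsBoundedBorel C') :
    A.upperDensity n (C ∪ C') ≤ A.upperDensity n C + A.upperDensity n C' :=
  (limsup_le_limsup ((eventually_gt_atTop 0).mono fun _ hr => A.ratio_union_le hC hC' hr)).trans
    ennreal_limsup_add_le

lemma lowerDensity_union_le (hC : IsBoundedBorel C) (hC' : IsBoundedBorel C') :
    A.lowerDensity n (C ∪ C') ≤ A.lowerDensity n C + A.upperDensity n C' :=
  (liminf_le_liminf ((eventually_gt_atTop 0).mono fun _ hr => A.ratio_union_le hC hC' hr)).trans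
    ennreal_liminf_add_le

lemma upperDensity_empty : A.upperDensity n (∅ : Set (𝔼 d)) = 0 := by
  have : A.ratio n (∅ : Set (𝔼 d)) = fun _ => 0 := by
    ext r
    rw [ratio, Set.smul_set_empty, A.apply_empty, zero_div, ENNReal.ofReal_zero]
  rw [upperDensity, this, limsup_const]

lemma upperDensity_biUnion_le {ι : Type*} {T : Finset ι} {P : ι → Set (𝔼 d)}
    (hP : ∀ i ∈ T, IsBoundedBorel (P i)) :
    A.upperDensity n (⋃ i ∈ T, P i) ≤ ∑ i ∈ T, A.upperDensity n (P i) := by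
  classical
  induction T using Finset.induction_on with
  | empty => simp [upperDensity_empty]
  | insert i T hi ih =>
    rw [Finset.forall_mem_insert] at hP
    rw [Finset.set_biUnion_insert, Finset.sum_insert hi]
    exact (A.upperDensity_union_le hP.1 (.biUnion hP.2)).trans (add_le_add_right (ih hP.2) _)

lemma ratio_mono (hC : IsBoundedBorel C) (hC' : IsBoundedBorel C') (h : C ⊆ C') {r : ℝ}
    (hr : 0 < r) : A.ratio n C r ≤ A.ratio n C' r := by
  refine ENNReal.ofReal_le_ofReal ?_
  gcongr
  exact A.mono (hC.smul r) (hC'.smul r) (Set.smul_set_mono h)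

lemma lowerDensity_mono (hC : IsBoundedBorel C) (hC' : IsBoundedBorel C') (h : C ⊆ C') :
    A.lowerDensity n C ≤ A.lowerDensity n C' :=
  liminf_le_liminf ((eventually_gt_atTop 0).mono fun _ hr => A.ratio_mono hC hC' h hr)

lemma eventually_two_le_dist_smul (hC : IsCompact C) (hC' : IsCompact C') (h : Disjoint C C') :
    ∀ᶠ r : ℝ in atTop, ∀ x ∈ r • C, ∀ y ∈ r • C', 2 ≤ dist x y := by
  obtain ⟨s, hs, hdisj⟩ := h.exists_thickenings hC hC'.isClosed
  filter_upwards [eventually_ge_atTop (2 / s), eventually_gt_atTop 0] with r hr hr₀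
  rintro _ ⟨x, hx, rfl⟩ _ ⟨y, hy, rfl⟩
  have hxy : s ≤ dist x y := by
    by_contra! hlt
    exact Set.disjoint_left.1 hdisj (Metric.self_subset_thickening hs _ hx)
      (Metric.mem_thickening_iff.2 ⟨y, hy, hlt⟩)
  calc 2 ≤ r * s := (div_le_iff₀ hs).1 hr
    _ ≤ r * dist x y := by gcongr
    _ = dist (r • x) (r • y) := by rw [dist_smul₀, Real.norm_of_nonneg hr₀.le]

lemma lowerDensity_add_le (hC : IsCompact C) (hC' : IsCompact C') (h : Disjoint C C') :
    A.lowerDensity n C + A.lowerDensity n C' ≤ A.lowerDensity n (C ∪ C') := by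
  refine ennreal_le_liminf_add.trans (liminf_le_liminf ?_)
  filter_upwards [eventually_two_le_dist_smul hC hC' h, eventually_gt_atTop 0] with r hsep hr
  have hrC := (IsBoundedBorel.of_isCompact hC).smul r
  have hrC' := (IsBoundedBorel.of_isCompact hC').smul r
  have hA := A.nonneg _ _ hrC.1 hrC.2
  have hA' := A.nonneg _ _ hrC'.1 hrC'.2
  rw [Pi.add_apply, ratio, ratio, ratio, ← ENNReal.ofReal_add (by positivity) (by positivity),
    ← add_div, Set.smul_set_union, A.union _ _ _ hrC.1 hrC.2 hrC'.1 hrC'.2 hsep]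

lemma sum_lowerDensity_le {ι : Type*} {T : Finset ι} {P : ι → Set (𝔼 d)}
    (hP : ∀ i ∈ T, IsCompact (P i)) (hdisj : (T : Set ι).PairwiseDisjoint P) :
    ∑ i ∈ T, A.lowerDensity n (P i) ≤ A.lowerDensity n (⋃ i ∈ T, P i) := by
  classical
  induction T using Finset.induction_on with
  | empty => simp
  | insert i T hi ih =>
    rw [Finset.forall_mem_insert] at hP
    rw [Finset.coe_insert, Set.pairwiseDisjoint_insert_of_notMem hi] at hdisj
    rw [Finset.set_biUnion_insert, Finset.sum_insert hi]
    refine (add_le_add_right (ih hP.2 hdisj.1) _).trans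
      (A.lowerDensity_add_le hP.1 (T.isCompact_biUnion hP.2) ?_)
    exact Set.disjoint_iUnion₂_right.2 hdisj.2

section Image

variable {m : ℕ} {g : 𝔼 m → 𝔼 d} {K : NNReal} {X : Set (𝔼 m)}

lemma ratio_image_le (hg : LipschitzOnWith K g X) (hX : IsBoundedBorel X)
    (hgX : IsBoundedBorel (g '' X)) (hK : K ≠ 0) {r : ℝ} (hr : 0 < r) :
    A.ratio n (g '' X) r ≤ ENNReal.ofReal K ^ n * A.ratio n X (K * r) := by
  have hK' : (0 : ℝ) < K := by positivity
  rw [ratio, ratio, ← ENNReal.ofReal_pow hK'.le, ← ENNReal.ofReal_mul (by positivity), mul_pow,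
    ← mul_div_assoc, mul_div_mul_left _ _ (by positivity)]
  gcongr
  exact A.apply_smul_image_le hg hX hgX hK hr

lemma upperDensity_image_le (hg : LipschitzOnWith K g X) (hX : IsBoundedBorel X)
    (hgX : IsBoundedBorel (g '' X)) (hK : K ≠ 0) :
    A.upperDensity n (g '' X) ≤ (K : ENNReal) ^ n * A.upperDensity n X := by
  simpa using A.upperDensity_le_of_eventually (t := K) (e := fun _ => 0) (by positivity)
    ((eventually_gt_atTop 0).mono fun r hr => by
      simpa using A.ratio_image_le (n := n) hg hX hgX hK hr)

lemma lowerDensity_image_le (hg : LipschitzOnWith K g X) (hX : IsBoundedBorel X)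
    (hgX : IsBoundedBorel (g '' X)) (hK : K ≠ 0) :
    A.lowerDensity n (g '' X) ≤ (K : ENNReal) ^ n * A.lowerDensity n X := by
  simpa using A.lowerDensity_le_of_eventually (t := K) (e := fun _ => 0) (by positivity)
    ((eventually_gt_atTop 0).mono fun r hr => by
      simpa using A.ratio_image_le (n := n) hg hX hgX hK hr)

end Image

end PackingBoundFunction

/-! ### Cubes and grids -/

section Cubes

variable {n : ℕ}

/-- The closed axis-parallel cube with minimal vertex `v` and side length `s`. -/
def cubeAt (v : 𝔼 n) (s : ℝ) : Set (𝔼 n) := {x | ∀ i, x i ∈ Set.Icc (v i) (v i + s)}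

lemma isCompact_cubeAt (v : 𝔼 n) (s : ℝ) : IsCompact (cubeAt v s) := by
  have himage : cubeAt v s = (EuclideanSpace.equiv (Fin n) ℝ).symm ''
      Set.Icc v.ofLp (fun i => v i + s) := by
    rw [ContinuousLinearEquiv.image_symm_eq_preimage]
    ext x
    exact forall_and
  rw [himage]
  exact isCompact_Icc.image (EuclideanSpace.equiv (Fin n) ℝ).symm.continuous

lemma smul_cubeAt (v : 𝔼 n) (s : ℝ) {r : ℝ} (hr : 0 < r) :
    r • cubeAt v s = cubeAt (r • v) (r * s) := by
  ext x
  simp only [Set.mem_smul_set_iff_inv_smul_mem₀ hr.ne', cubeAt, Set.mem_ofPred_eq, Set.mem_Icc,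
    PiLp.smul_apply, smul_eq_mul, ← mul_add, le_inv_mul_iff₀ hr, inv_mul_le_iff₀ hr]

lemma unitCube_eq_cubeAt : unitCube n = cubeAt 0 1 := by
  simp only [unitCube, cubeAt, PiLp.zero_apply, zero_add]

lemma smul_unitCube {r : ℝ} (hr : 0 < r) : r • unitCube n = cubeAt 0 r := by
  rw [unitCube_eq_cubeAt, smul_cubeAt 0 1 hr, smul_zero, mul_one]

lemma isCompact_unitCube : IsCompact (unitCube n) :=
  unitCube_eq_cubeAt ▸ isCompact_cubeAt 0 1

lemma volume_pi_euclideanSpace (s : Fin n → Set ℝ) :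
    volume {x : 𝔼 n | ∀ i, x i ∈ s i} = ∏ i, volume (s i) := by
  rw [← volume_pi_pi,
    ← (EuclideanSpace.volume_preserving_symm_measurableEquiv_toLp (Fin n)).measure_preimage_equiv]
  congr 1
  ext x
  simp [Set.mem_pi]

lemma volume_cubeAt (v : 𝔼 n) (s : ℝ) : volume (cubeAt v s) = ENNReal.ofReal s ^ n := by
  rw [cubeAt, volume_pi_euclideanSpace fun i => Set.Icc (v i) (v i + s)]
  simp only [Real.volume_Icc, add_sub_cancel_left, Finset.prod_const, Finset.card_univ,
    Fintype.card_fin]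

lemma dist_le_of_mem_cubeAt {v x y : 𝔼 n} {s : ℝ} (hs : 0 ≤ s) (hx : x ∈ cubeAt v s)
    (hy : y ∈ cubeAt v s) : dist x y ≤ √n * s := by
  rw [EuclideanSpace.dist_eq, ← Real.sqrt_sq hs, ← Real.sqrt_mul n.cast_nonneg]
  refine Real.sqrt_le_sqrt ((Finset.sum_le_card_nsmul _ _ (s ^ 2) fun i _ => ?_).trans_eq ?_)
  · gcongr
    simpa using Real.dist_le_of_mem_Icc (hx i) (hy i)
  · rw [Finset.card_univ, Fintype.card_fin, nsmul_eq_mul]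

lemma exists_subset_cubeAt {F : Set (𝔼 n)} (hF : IsBounded F) :
    ∃ (v : 𝔼 n) (s : ℝ), 0 < s ∧ F ⊆ cubeAt v s := by
  obtain ⟨M, hM, hFM⟩ := hF.exists_pos_norm_le
  refine ⟨WithLp.toLp 2 fun _ => -M, 2 * M, by positivity, fun x hx i => ?_⟩
  have hxi := abs_le.1 ((PiLp.norm_apply_le x i).trans (hFM x hx))
  exact ⟨hxi.1, by simpa [two_mul] using hxi.2⟩

/-- The vertex of the cubical grid of mesh `h` with integer coordinates `k`. -/
noncomputable def gridPoint (h : ℝ) (k : Fin n → ℤ) : 𝔼 n := WithLp.toLp 2 fun i => h * k i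

/-- The half-open cell of the cubical grid of mesh `h` with minimal vertex `gridPoint h k`. -/
def gridCell (h : ℝ) (k : Fin n → ℤ) : Set (𝔼 n) := {x | ∀ i, ⌊x i / h⌋ = k i}

variable {h : ℝ}

lemma gridCell_eq (hh : 0 < h) (k : Fin n → ℤ) :
    gridCell h k = {x | ∀ i, x i ∈ Set.Ico (h * k i) (h * (k i + 1))} := by
  simp only [gridCell, Int.floor_eq_iff, Set.mem_Ico, le_div_iff₀' hh, div_lt_iff₀' hh]

lemma volume_gridCell (hh : 0 < h) (k : Fin n → ℤ) :
    volume (gridCell h k) = ENNReal.ofReal h ^ n := by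
  rw [gridCell_eq hh, volume_pi_euclideanSpace fun i => Set.Ico (h * k i) (h * (k i + 1))]
  simp only [Real.volume_Ico, ← mul_sub, add_sub_cancel_left, mul_one, Finset.prod_const,
    Finset.card_univ, Fintype.card_fin]

lemma measurableSet_gridCell (k : Fin n → ℤ) : MeasurableSet (gridCell h k) := by
  simp only [gridCell, Set.ofPred_forall]
  exact .iInter fun i => measurableSet_eq_fun (by fun_prop) measurable_const

lemma pairwise_disjoint_gridCell : Pairwise (Function.onFun Disjoint (gridCell (n := n) h)) :=
  fun _ _ hkl => Set.disjoint_left.2 fun _ hk hl => hkl (funext fun i => (hk i).symm.trans (hl i))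

lemma gridCell_subset_cubeAt (hh : 0 < h) (k : Fin n → ℤ) :
    gridCell h k ⊆ cubeAt (gridPoint h k) h := by
  intro x hx i
  rw [gridCell_eq hh] at hx
  exact ⟨(hx i).1, by simpa [gridPoint, mul_add] using (hx i).2.le⟩

lemma dist_gridPoint_le (hh : 0 < h) {k : Fin n → ℤ} {x : 𝔼 n}
    (hx : x ∈ cubeAt (gridPoint h k) h) : dist x (gridPoint h k) ≤ √n * h :=
  dist_le_of_mem_cubeAt hh.le hx fun _ => ⟨le_rfl, le_add_of_nonneg_right hh.le⟩

lemma card_mul_le_volume_of_gridCell_subset (hh : 0 < h) {Y : Set (𝔼 n)}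
    {T : Finset (Fin n → ℤ)} (hT : ∀ k ∈ T, gridCell h k ⊆ Y) :
    T.card * ENNReal.ofReal h ^ n ≤ volume Y :=
  calc T.card * ENNReal.ofReal h ^ n = ∑ k ∈ T, volume (gridCell h k) := by
        simp only [volume_gridCell hh, Finset.sum_const, nsmul_eq_mul]
    _ = volume (⋃ k ∈ T, gridCell h k) :=
        (measure_biUnion_finset (pairwise_disjoint_gridCell.set_pairwise _)
          fun k _ => measurableSet_gridCell k).symm
    _ ≤ volume Y := measure_mono (Set.iUnion₂_subset hT)

lemma exists_grid_cover (hh : 0 < h) {F Y : Set (𝔼 n)} (hY : volume Y ≠ ⊤)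
    (hFY : ∀ x ∈ F, Metric.closedBall x (√n * h) ⊆ Y) :
    ∃ T : Finset (Fin n → ℤ), F ⊆ ⋃ k ∈ T, cubeAt (gridPoint h k) h ∧
      T.card * ENNReal.ofReal h ^ n ≤ volume Y := by
  set I : Set (Fin n → ℤ) := {k | (gridCell h k ∩ F).Nonempty}
  have hIY : ∀ k ∈ I, gridCell h k ⊆ Y := fun k ⟨x, hxk, hxF⟩ y hy =>
    hFY x hxF (dist_le_of_mem_cubeAt hh.le (gridCell_subset_cubeAt hh k hy)
      (gridCell_subset_cubeAt hh k hxk))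
  have hfin : I.Finite := by
    have huniv := Measure.finite_const_le_meas_of_disjoint_iUnion (volume : Measure (𝔼 n))
      (ε := ENNReal.ofReal h ^ n) (by positivity) (fun k : I => measurableSet_gridCell k.1)
      (fun k l hkl => pairwise_disjoint_gridCell (Subtype.coe_injective.ne hkl))
      (measure_ne_top_of_subset (Set.iUnion_subset fun k => hIY k k.2) hY)
    simp only [volume_gridCell hh, le_refl, Set.ofPred_true, Set.finite_univ_iff] at huniv
    exact I.toFinite
  refine ⟨hfin.toFinset, fun x hx => ?_, card_mul_le_volume_of_gridCell_subset hh fun k hk =>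
    hIY k (hfin.mem_toFinset.1 hk)⟩
  have hxk : x ∈ gridCell h fun i => ⌊x i / h⌋ := fun _ => rfl
  exact Set.mem_iUnion₂.2 ⟨_, hfin.mem_toFinset.2 ⟨x, hxk, hx⟩, gridCell_subset_cubeAt hh _ hxk⟩

end Cubes

/-! ### The density of Euclidean sets -/

namespace PackingBoundFunction

variable (A : PackingBoundFunction) {n : ℕ}

/-- The constant `δ_{A,n}`, as the infimum of `A(s[0,1]^n) / s^n` over all `s > 0`; see
`pbfDensity_eq` for the comparison with `pbfDensity`. -/
noncomputable def cubeDensity (n : ℕ) : ENNReal :=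
  ⨅ s : Set.Ioi (0 : ℝ), A.ratio n (unitCube n) s

lemma cubeDensity_ne_top : A.cubeDensity n ≠ ⊤ :=
  ne_top_of_le_ne_top ENNReal.ofReal_ne_top (iInf_le _ ⟨1, Set.mem_Ioi.2 one_pos⟩)

lemma apply_cubeAt_le (v w : 𝔼 n) (s : ℝ) : A.toFun n (cubeAt v s) ≤ A.toFun n (cubeAt w s) := by
  have hv := IsBoundedBorel.of_isCompact (isCompact_cubeAt v s)
  have hw := IsBoundedBorel.of_isCompact (isCompact_cubeAt w s)
  refine A.lipschitz _ _ _ _ hv.1 hv.2 hw.1 hw.2 ⟨(· + (w - v)), fun x hx i => ?_, fun x _ y _ =>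
    (dist_add_right x y _).ge⟩
  simp only [PiLp.add_apply, PiLp.sub_apply, Set.mem_Icc]
  exact ⟨by linarith [(hx i).1], by linarith [(hx i).2]⟩

lemma apply_cubeAt (v : 𝔼 n) {s : ℝ} (hs : 0 < s) :
    A.toFun n (cubeAt v s) = A.toFun n (s • unitCube n) := by
  rw [smul_unitCube hs]
  exact le_antisymm (A.apply_cubeAt_le v 0 s) (A.apply_cubeAt_le 0 v s)

lemma ratio_cubeAt (v : 𝔼 n) {s r : ℝ} (hs : 0 < s) (hr : 0 < r) :
    A.ratio n (cubeAt v s) r = ENNReal.ofReal s ^ n * A.ratio n (unitCube n) (r * s) := by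
  rw [ratio, ratio, smul_cubeAt v s hr, A.apply_cubeAt _ (by positivity),
    ← ENNReal.ofReal_pow hs.le, ← ENNReal.ofReal_mul (by positivity), mul_pow]
  congr 1
  field_simp

lemma cubeDensity_mul_le_lowerDensity_cubeAt (v : 𝔼 n) {s : ℝ} (hs : 0 < s) :
    A.cubeDensity n * volume (cubeAt v s) ≤ A.lowerDensity n (cubeAt v s) := by
  refine le_liminf_of_le (h := (eventually_gt_atTop 0).mono fun r hr => ?_)
  rw [A.ratio_cubeAt v hs hr, volume_cubeAt, mul_comm]
  gcongr
  exact iInf_le_of_le ⟨r * s, mul_pos hr hs⟩ le_rfl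

lemma ratio_le_volume_cthickening_mul {F : Set (𝔼 n)} (hF : IsBoundedBorel F) {r s : ℝ}
    (hr : 0 < r) (hs : 0 < s) :
    A.ratio n F r ≤
      volume (Metric.cthickening (√n * (s / r)) F) * A.ratio n (unitCube n) s := by
  have hh : 0 < s / r := by positivity
  obtain ⟨T, hcov, hT⟩ := exists_grid_cover hh
    hF.isBounded.cthickening.measure_lt_top.ne fun x hx => Metric.closedBall_subset_cthickening hx _
  have hcube (k : Fin n → ℤ) : IsBoundedBorel (r • cubeAt (gridPoint (s / r) k) (s / r)) :=
    (IsBoundedBorel.of_isCompact (isCompact_cubeAt _ _)).smul r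
  have hA : A.toFun n (r • F) ≤ T.card * A.toFun n (s • unitCube n) :=
    calc A.toFun n (r • F)
        ≤ A.toFun n (⋃ k ∈ T, r • cubeAt (gridPoint (s / r) k) (s / r)) :=
          A.mono (hF.smul r) (.biUnion fun k _ => hcube k) (by
            rw [← Set.smul_set_iUnion₂]
            exact Set.smul_set_mono hcov)
      _ ≤ ∑ k ∈ T, A.toFun n (r • cubeAt (gridPoint (s / r) k) (s / r)) :=
          A.biUnion_le fun k _ => hcube k
      _ = T.card * A.toFun n (s • unitCube n) := by
          simp only [smul_cubeAt _ _ hr, mul_div_cancel₀ s hr.ne', A.apply_cubeAt _ hs,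
            Finset.sum_const, nsmul_eq_mul]
  calc A.ratio n F r
      ≤ ENNReal.ofReal (T.card * (s / r) ^ n * (A.toFun n (s • unitCube n) / s ^ n)) := by
        refine ENNReal.ofReal_le_ofReal ?_
        rw [div_pow, mul_assoc, div_mul_div_comm, mul_comm (s ^ n),
          mul_div_mul_right _ _ (by positivity), ← mul_div_assoc]
        gcongr
    _ = T.card * ENNReal.ofReal (s / r) ^ n * A.ratio n (unitCube n) s := by
        rw [ENNReal.ofReal_mul (by positivity), ENNReal.ofReal_mul (by positivity),
          ENNReal.ofReal_natCast, ENNReal.ofReal_pow hh.le, ratio]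
    _ ≤ _ := by gcongr

theorem upperDensity_le_cubeDensity_mul {F : Set (𝔼 n)} (hF : IsCompact F) :
    A.upperDensity n F ≤ A.cubeDensity n * volume F := by
  rw [cubeDensity, ENNReal.iInf_mul fun h => absurd h hF.measure_lt_top.ne]
  refine le_iInf fun ⟨s, hs⟩ => ?_
  have hvol : Tendsto (fun r : ℝ => volume (Metric.cthickening (√n * (s / r)) F)) atTop
      (nhds (volume F)) := by
    refine (tendsto_measure_cthickening_of_isCompact hF).comp ?_
    simpa using (tendsto_id.const_div_atTop s).const_mul √n
  have hratio : A.ratio n (unitCube n) s ≠ ⊤ := ENNReal.ofReal_ne_top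
  calc A.upperDensity n F
      ≤ limsup (fun r => volume (Metric.cthickening (√n * (s / r)) F) * A.ratio n (unitCube n) s)
          atTop :=
        limsup_le_limsup ((eventually_gt_atTop 0).mono fun r hr =>
          A.ratio_le_volume_cthickening_mul (.of_isCompact hF) hr hs)
    _ = A.ratio n (unitCube n) s * volume F := by
        rw [mul_comm]
        exact (ENNReal.Tendsto.mul_const hvol (.inr hratio)).limsup_eq

end PackingBoundFunction

/-! ### Approximation of Lipschitz images -/

namespace PackingBoundFunction

variable (A : PackingBoundFunction) {n d : ℕ} {C C' : Set (𝔼 d)} {f : 𝔼 n → 𝔼 d} {K : NNReal}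
  {S : Set (𝔼 n)}

lemma ratio_le_of_subset_thickening (hC : IsBoundedBorel C) (hC' : IsBoundedBorel C') {ε r : ℝ}
    (hε : 0 < ε) (hr : 0 < r) (hCC' : C ⊆ Metric.thickening (ε / ((1 + ε) * r)) C') :
    A.ratio n C r ≤ ENNReal.ofReal (1 + ε) ^ n * A.ratio n C' ((1 + ε) * r) := by
  have hR : 0 < (1 + ε) * r := by positivity
  have hrC : r • C = (1 / (1 + ε)) • ((1 + ε) * r) • C := by
    rw [smul_smul, one_div, inv_mul_cancel_left₀ (by positivity)]
  have hmesh : A.toFun d (r • C) ≤ A.toFun d (((1 + ε) * r) • C') := by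
    rw [hrC]
    refine A.mesh ε hε d _ _ (hC.smul _).1 (hC.smul _).2 (hC'.smul _).1 (hC'.smul _).2 ?_
    rintro _ ⟨x, hx, rfl⟩
    obtain ⟨y, hy, hxy⟩ := Metric.mem_thickening_iff.1 (hCC' hx)
    refine Metric.mem_thickening_iff.2 ⟨_, Set.smul_mem_smul_set hy, ?_⟩
    rwa [dist_smul₀, Real.norm_of_nonneg hR.le, ← lt_div_iff₀' hR]
  rw [ratio, ratio, ← ENNReal.ofReal_pow (by positivity), ← ENNReal.ofReal_mul (by positivity),
    mul_pow, ← mul_div_assoc, mul_div_mul_left _ _ (by positivity)]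
  gcongr

lemma ratio_image_le_volume_div (hf : LipschitzWith K f) {F Y : Set (𝔼 n)}
    (hfF : IsBoundedBorel (f '' F)) {a r : ℝ} (ha : 0 < a) (hr : 0 < r)
    (hKa : K * (√n * a) < 1) (hY : volume Y ≠ ⊤)
    (hFY : ∀ x ∈ F, Metric.closedBall x (√n * (a / r)) ⊆ Y) :
    A.ratio n (f '' F) r ≤ volume Y / ENNReal.ofReal a ^ n := by
  have hh : 0 < a / r := by positivity
  obtain ⟨T, hcov, hT⟩ := exists_grid_cover hh hY hFY
  have hA : A.toFun d (r • f '' F) ≤ T.card := by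
    refine A.le_card_of_subset_biUnion_ball (z := fun k => r • f (gridPoint (a / r) k))
      (hfF.smul r) ?_
    rintro _ ⟨_, ⟨x, hx, rfl⟩, rfl⟩
    obtain ⟨k, hk, hxk⟩ := Set.mem_iUnion₂.1 (hcov hx)
    refine Set.mem_iUnion₂.2 ⟨k, hk, ?_⟩
    calc dist (r • f x) (r • f (gridPoint (a / r) k))
        = r * dist (f x) (f (gridPoint (a / r) k)) := by rw [dist_smul₀, Real.norm_of_nonneg hr.le]
      _ ≤ r * (K * (√n * (a / r))) := by
          gcongr
          exact (hf.dist_le_mul _ _).trans (by gcongr; exact dist_gridPoint_le hh hxk)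
      _ = K * (√n * a) := by field_simp
      _ < 1 := hKa
  have : 0 < ENNReal.ofReal r ^ n := by positivity
  rw [ENNReal.le_div_iff_mul_le (.inl (by positivity)) (.inl (by finiteness))]
  calc A.ratio n (f '' F) r * ENNReal.ofReal a ^ n
      ≤ ENNReal.ofReal (T.card / r ^ n) * ENNReal.ofReal a ^ n := by
        rw [ratio]
        gcongr
    _ = T.card * ENNReal.ofReal (a / r) ^ n := by
        rw [← ENNReal.ofReal_natCast, ← ENNReal.ofReal_pow ha.le, ← ENNReal.ofReal_pow hh.le,
          ← ENNReal.ofReal_mul (by positivity), ← ENNReal.ofReal_mul (by positivity), div_pow,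
          div_mul_eq_mul_div, mul_div_assoc]
    _ ≤ volume Y := hT

-- Points of `f '' S` near `C'` are handled by the mesh axiom; the remaining ones are covered by
-- few unit balls, whose number is controlled by the part of `S` that `f` does not map to `C'`.
lemma ratio_image_le_add (hf : LipschitzWith K f) (hS : IsCompact S) (hC' : IsCompact C')
    {ε a r : ℝ} (hε : 0 < ε) (ha : 0 < a) (hr : 0 < r) (hKa : K * (√n * a) < ε / (1 + ε)) :
    A.ratio n (f '' S) r ≤ ENNReal.ofReal (1 + ε) ^ n * A.ratio n C' ((1 + ε) * r) +
      volume (Metric.cthickening (√n * (a / r)) S \ f ⁻¹' C') / ENNReal.ofReal a ^ n := by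
  set N := Metric.thickening (ε / ((1 + ε) * r)) C'
  have hNm : MeasurableSet N := Metric.isOpen_thickening.measurableSet
  have hfS : IsBoundedBorel (f '' S) := .of_isCompact (hS.image hf.continuous)
  have hfar : f '' S \ N = f '' (S \ f ⁻¹' N) := by
    rw [Set.sdiff_eq, Set.sdiff_eq, ← Set.preimage_compl, Set.image_inter_preimage]
  have hY : ∀ x ∈ S \ f ⁻¹' N, Metric.closedBall x (√n * (a / r)) ⊆
      Metric.cthickening (√n * (a / r)) S \ f ⁻¹' C' := by
    refine fun x hx y hy => ⟨Metric.closedBall_subset_cthickening hx.1 _ hy, fun hyC' => hx.2 ?_⟩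
    refine Metric.mem_thickening_iff.2 ⟨f y, hyC', ?_⟩
    calc dist (f x) (f y) ≤ K * (√n * (a / r)) :=
          (hf.dist_le_mul _ _).trans (by gcongr; exact Metric.mem_closedBall'.1 hy)
      _ = K * (√n * a) / r := by ring
      _ < ε / (1 + ε) / r := by gcongr
      _ = ε / ((1 + ε) * r) := div_div _ _ _
  rw [← Set.inter_union_sdiff (f '' S) N]
  refine (A.ratio_union_le (hfS.inter hNm) (hfS.diff hNm) hr).trans (add_le_add ?_ ?_)
  · exact A.ratio_le_of_subset_thickening (hfS.inter hNm) (.of_isCompact hC') hε hr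
      Set.inter_subset_right
  · have hκ : ε / (1 + ε) < 1 := by rw [div_lt_one (by positivity)]; linarith
    rw [hfar]
    exact A.ratio_image_le_volume_div hf (hfar ▸ hfS.diff hNm) ha hr (hKa.trans hκ)
      (measure_ne_top_of_subset Set.sdiff_subset hS.isBounded.cthickening.measure_lt_top.ne) hY

end PackingBoundFunction

lemma ennreal_le_of_forall_le_pow_mul {a b : ENNReal} (k : ℕ)
    (h : ∀ L : NNReal, 1 < L → a ≤ (L : ENNReal) ^ k * b) : a ≤ b := by
  have hlim : Tendsto (fun L : NNReal => (L : ENNReal) ^ k * b) (nhdsWithin 1 (Set.Ioi 1))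
      (nhds b) := by
    have hpow : Tendsto (fun L : NNReal => (L : ENNReal) ^ k) (nhdsWithin 1 (Set.Ioi 1))
        (nhds 1) := by
      refine tendsto_nhdsWithin_of_tendsto_nhds (Continuous.tendsto' ?_ _ _ (by simp))
      exact (ENNReal.continuous_pow k).comp ENNReal.continuous_coe
    simpa using ENNReal.Tendsto.mul_const hpow (.inl one_ne_zero)
  exact ge_of_tendsto hlim (eventually_mem_nhdsWithin.mono h)

lemma ennreal_le_of_forall_exists_le_add {a b : ENNReal} (k : ℕ)
    (h : ∀ L : NNReal, 1 < L →
      ∃ M : ENNReal, M ≠ ⊤ ∧ ∀ η ≠ 0, a ≤ (L : ENNReal) ^ k * b + M * η) :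
    a ≤ b := by
  refine ennreal_le_of_forall_le_pow_mul k fun L hL => ?_
  obtain ⟨M, hM, hη⟩ := h L hL
  have hlim : Tendsto (fun η => (L : ENNReal) ^ k * b + M * η) (nhdsWithin 0 (Set.Ioi 0))
      (nhds ((L : ENNReal) ^ k * b)) := by
    refine tendsto_nhdsWithin_of_tendsto_nhds ?_
    simpa using (ENNReal.Tendsto.const_mul (tendsto_id (x := nhds (0 : ENNReal)))
      (.inr hM)).const_add ((L : ENNReal) ^ k * b)
  exact ge_of_tendsto hlim (eventually_mem_nhdsWithin.mono fun η hη₀ => hη η (ne_of_gt hη₀))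

lemma tendsto_measure_cthickening_sdiff {X : Type*} [MetricSpace X] [ProperSpace X]
    [MeasurableSpace X] [OpensMeasurableSpace X] {μ : Measure X} [IsFiniteMeasureOnCompacts μ]
    {S B : Set X} (hS : IsCompact S) (hB : MeasurableSet B) :
    Tendsto (fun r => μ (Metric.cthickening r S \ B)) (nhds 0) (nhds (μ (S \ B))) := by
  simpa only [Measure.restrict_apply' hB.compl, ← Set.sdiff_eq] using
    tendsto_measure_cthickening_of_isCompact (μ := μ.restrict Bᶜ) hS

lemma limsup_volume_cthickening_sdiff_div {n : ℕ} {S B : Set (𝔼 n)} (hS : IsCompact S)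
    (hB : MeasurableSet B) {a : ℝ} (ha : 0 < a) :
    limsup (fun r : ℝ => volume (Metric.cthickening (√n * (a / r)) S \ B) / ENNReal.ofReal a ^ n)
      atTop = volume (S \ B) / ENNReal.ofReal a ^ n := by
  have hmesh : Tendsto (fun r : ℝ => √n * (a / r)) atTop (nhds 0) := by
    simpa using (tendsto_id.const_div_atTop a).const_mul √n
  exact (ENNReal.Tendsto.div_const ((tendsto_measure_cthickening_sdiff hS hB).comp hmesh)
    (.inr (by positivity))).limsup_eq

namespace PackingBoundFunction

variable (A : PackingBoundFunction) {n d : ℕ} {f : 𝔼 n → 𝔼 d} {K : NNReal} {S : Set (𝔼 n)}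

lemma exists_density_image_le_add (hf : LipschitzWith K f) (hS : IsCompact S) {L : NNReal}
    (hL : 1 < L) :
    ∃ M : ENNReal, M ≠ ⊤ ∧ ∀ C' : Set (𝔼 d), IsCompact C' →
      A.upperDensity n (f '' S) ≤ (L : ENNReal) ^ n * A.upperDensity n C' +
        M * volume (S \ f ⁻¹' C') ∧
      A.lowerDensity n (f '' S) ≤ (L : ENNReal) ^ n * A.lowerDensity n C' +
        M * volume (S \ f ⁻¹' C') := by
  set ε : ℝ := L - 1 with hε_def
  have hε : 0 < ε := sub_pos.2 (by exact_mod_cast hL)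
  have hεL : ENNReal.ofReal (1 + ε) = L := by
    rw [hε_def, add_sub_cancel, ENNReal.ofReal_coe_nnreal]
  obtain ⟨a, ha, hKa⟩ := exists_pos_mul_lt (show 0 < ε / (1 + ε) by positivity) (K * √n)
  rw [mul_assoc] at hKa
  have ha_pow : 0 < ENNReal.ofReal a ^ n := by positivity
  refine ⟨(ENNReal.ofReal a ^ n)⁻¹, ENNReal.inv_ne_top.2 ha_pow.ne', fun C' hC' => ?_⟩
  have hratio := (eventually_gt_atTop (0 : ℝ)).mono fun r hr =>
    A.ratio_image_le_add hf hS hC' hε ha hr hKa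
  rw [← hεL, mul_comm _ (volume _), ← div_eq_mul_inv,
    ← limsup_volume_cthickening_sdiff_div hS
    (hf.continuous.measurable hC'.measurableSet) ha]
  exact ⟨A.upperDensity_le_of_eventually (by positivity) hratio,
    A.lowerDensity_le_of_eventually (by positivity) hratio⟩

theorem upperDensity_image_le_of_approx (hf : LipschitzWith K f) (hS : IsCompact S) {b : ENNReal}
    (h : ∀ η ≠ 0, ∃ C' : Set (𝔼 d), IsCompact C' ∧ volume (S \ f ⁻¹' C') ≤ η ∧
      A.upperDensity n C' ≤ b) :
    A.upperDensity n (f '' S) ≤ b := by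
  refine ennreal_le_of_forall_exists_le_add n fun L hL => ?_
  obtain ⟨M, hM, hC'⟩ := A.exists_density_image_le_add hf hS hL
  refine ⟨M, hM, fun η hη => ?_⟩
  obtain ⟨C', hcpt, hvol, hb⟩ := h η hη
  exact (hC' C' hcpt).1.trans (by gcongr)

theorem lowerDensity_image_le_of_approx (hf : LipschitzWith K f) (hS : IsCompact S) {b : ENNReal}
    (h : ∀ η ≠ 0, ∃ C' : Set (𝔼 d), IsCompact C' ∧ volume (S \ f ⁻¹' C') ≤ η ∧
      A.lowerDensity n C' ≤ b) :
    A.lowerDensity n (f '' S) ≤ b := by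
  refine ennreal_le_of_forall_exists_le_add n fun L hL => ?_
  obtain ⟨M, hM, hC'⟩ := A.exists_density_image_le_add hf hS hL
  refine ⟨M, hM, fun η hη => ?_⟩
  obtain ⟨C', hcpt, hvol, hb⟩ := h η hη
  exact (hC' C' hcpt).2.trans (by gcongr)

theorem cubeDensity_mul_le_lowerDensity {F : Set (𝔼 n)} (hF : IsCompact F) :
    A.cubeDensity n * volume F ≤ A.lowerDensity n F := by
  obtain ⟨v, s, hs, hFQ⟩ := exists_subset_cubeAt hF.isBounded
  set Q := cubeAt v s
  have hQ : IsCompact Q := isCompact_cubeAt v s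
  have hQF : MeasurableSet (Q \ F) := hQ.measurableSet.diff hF.measurableSet
  have hQF_top : volume (Q \ F) ≠ ⊤ :=
    measure_ne_top_of_subset Set.sdiff_subset hQ.measure_lt_top.ne
  have hQ_le : A.lowerDensity n Q ≤ A.lowerDensity n F + A.cubeDensity n * volume (Q \ F) := by
    rw [← Set.image_id Q]
    refine A.lowerDensity_image_le_of_approx LipschitzWith.id hQ fun η hη => ?_
    obtain ⟨G, hGQ, hG, hGη⟩ := hQF.exists_isCompact_sdiff_lt hQF_top hη
    refine ⟨F ∪ G, hF.union hG, ?_, ?_⟩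
    · rw [Set.preimage_id, ← Set.sdiff_sdiff]
      exact hGη.le
    · calc A.lowerDensity n (F ∪ G) ≤ A.lowerDensity n F + A.upperDensity n G :=
            A.lowerDensity_union_le (.of_isCompact hF) (.of_isCompact hG)
        _ ≤ A.lowerDensity n F + A.cubeDensity n * volume G := by
            gcongr
            exact A.upperDensity_le_cubeDensity_mul hG
        _ ≤ _ := by
            rw [Set.image_id]
            gcongr
  have htop := ENNReal.mul_ne_top (A.cubeDensity_ne_top (n := n)) hQF_top
  refine (ENNReal.add_le_add_iff_right htop).1 ?_
  calc A.cubeDensity n * volume F + A.cubeDensity n * volume (Q \ F)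
      = A.cubeDensity n * volume Q := by
        rw [← mul_add, measure_add_sdiff hF.measurableSet.nullMeasurableSet,
          Set.union_eq_right.2 hFQ]
    _ ≤ A.lowerDensity n Q := A.cubeDensity_mul_le_lowerDensity_cubeAt v hs
    _ ≤ _ := hQ_le

end PackingBoundFunction

/-! ### Perturbations of linear maps -/

section LinearAlgebra

variable {V W : Type*} [NormedAddCommGroup V] [InnerProductSpace ℝ V]
  [NormedAddCommGroup W]

lemma exists_linearMap_norm_eq_of_injective [FiniteDimensional ℝ V] [InnerProductSpace ℝ W]
    {Λ : V →ₗ[ℝ] W} (hΛ : Function.Injective Λ) : ∃ T : V →ₗ[ℝ] V, ∀ v, ‖T v‖ = ‖Λ v‖ := by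
  let e : LinearMap.range Λ ≃ₗᵢ[ℝ] V := (stdOrthonormalBasis ℝ _).equiv (stdOrthonormalBasis ℝ V)
    (finCongr (LinearMap.finrank_range_of_inj hΛ))
  exact ⟨e.toLinearEquiv.toLinearMap ∘ₗ Λ.rangeRestrict, fun v => e.norm_map (Λ.rangeRestrict v)⟩

lemma norm_le_mul_norm_of_norm_sub_le {L : ℝ} (hL : 1 < L) {w u : W}
    (h : ‖w - u‖ ≤ (1 - L⁻¹) * ‖u‖) : ‖w‖ ≤ L * ‖u‖ ∧ ‖u‖ ≤ L * ‖w‖ := by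
  have hL₀ : 0 < L := zero_lt_one.trans hL
  have hinv : 1 - L⁻¹ ≤ L - 1 := by
    have : 0 ≤ (L - 1) ^ 2 / L := by positivity
    have : (L - 1) ^ 2 / L = L - 1 - (1 - L⁻¹) := by field_simp
    linarith
  constructor
  · calc ‖w‖ ≤ ‖w - u‖ + ‖u‖ := norm_le_norm_sub_add w u
      _ ≤ (L - 1) * ‖u‖ + ‖u‖ := by grw [h, hinv]
      _ = L * ‖u‖ := by ring
  · have hu : L⁻¹ * ‖u‖ ≤ ‖w‖ := by linarith [norm_sub_norm_le u w, norm_sub_rev u w]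
    exact (inv_mul_le_iff₀ hL₀).1 hu

lemma exists_linearMap_nearly_isometric [FiniteDimensional ℝ V] [InnerProductSpace ℝ W]
    {Λ : V →L[ℝ] W} (hΛ : Function.Injective Λ) {L : ℝ} (hL : 1 < L) :
    ∃ ρ : NNReal, ρ ≠ 0 ∧ ∃ T : V →ₗ[ℝ] V, Function.Injective T ∧
      ∀ v w, ‖w - Λ v‖ ≤ ρ * ‖v‖ → ‖w‖ ≤ L * ‖T v‖ ∧ ‖T v‖ ≤ L * ‖w‖ := by
  obtain ⟨T, hT⟩ := exists_linearMap_norm_eq_of_injective (Λ := Λ.toLinearMap) hΛ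
  obtain ⟨K, hK, hΛK⟩ := Λ.toLinearMap.exists_antilipschitzWith (LinearMap.ker_eq_bot.2 hΛ)
  have hle (v : V) : ‖v‖ ≤ K * ‖Λ v‖ := hΛK.le_mul_norm (map_zero Λ) v
  have hκ : 0 < 1 - L⁻¹ := sub_pos.2 (inv_lt_one_of_one_lt₀ hL)
  refine ⟨⟨(1 - L⁻¹) / K, by positivity⟩, ?_, T, ?_, fun v w hvw => ?_⟩
  · exact fun h => (show (1 - L⁻¹) / (K : ℝ) ≠ 0 by positivity) (congrArg NNReal.toReal h)
  · refine (injective_iff_map_eq_zero T).2 fun v hv => norm_le_zero_iff.1 ?_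
    calc ‖v‖ ≤ K * ‖Λ v‖ := hle v
      _ = 0 := by rw [← ContinuousLinearMap.coe_coe, ← hT, hv, norm_zero, mul_zero]
  · rw [hT]
    refine norm_le_mul_norm_of_norm_sub_le hL (hvw.trans ?_)
    calc (1 - L⁻¹) / K * ‖v‖ ≤ (1 - L⁻¹) / K * (K * ‖Λ v‖) := by gcongr; exact hle v
      _ = (1 - L⁻¹) * ‖Λ v‖ := by field_simp

/-- The linear map multiplying the direction `e` by `t` and fixing the orthogonal complement of
`e`, for a unit vector `e`. -/
noncomputable def axisScaling (e : V) (t : ℝ) : V →ₗ[ℝ] V :=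
  LinearMap.transvection ((t - 1) • innerₛₗ ℝ e) e

lemma axisScaling_apply (e : V) (t : ℝ) (v : V) :
    axisScaling e t v = v + ((t - 1) * inner ℝ e v) • e := rfl

variable {e : V}

lemma det_axisScaling [FiniteDimensional ℝ V] (he : ‖e‖ = 1) (t : ℝ) :
    LinearMap.det (axisScaling e t) = t := by
  rw [axisScaling, LinearMap.transvection.det]
  simp [he]

lemma inner_axisScaling (he : ‖e‖ = 1) (t : ℝ) (v : V) :
    inner ℝ e (axisScaling e t v) = t * inner ℝ e v := by
  rw [axisScaling_apply, inner_add_right, inner_smul_right, real_inner_self_eq_norm_sq, he]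
  ring

lemma norm_sub_inner_smul_le (he : ‖e‖ = 1) (v : V) : ‖v - inner ℝ e v • e‖ ≤ ‖v‖ := by
  refine le_of_sq_le_sq ?_ (norm_nonneg _)
  rw [norm_sub_sq_real, inner_smul_right, norm_smul, he, real_inner_comm, mul_one,
    Real.norm_eq_abs, sq_abs]
  nlinarith [sq_nonneg (inner ℝ e v)]

lemma norm_sub_inner_smul_le_norm_axisScaling (he : ‖e‖ = 1) (t : ℝ) (v : V) :
    ‖v - inner ℝ e v • e‖ ≤ ‖axisScaling e t v‖ := by
  convert norm_sub_inner_smul_le he (axisScaling e t v) using 2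
  rw [inner_axisScaling he, axisScaling_apply]
  module

lemma mul_abs_inner_le_norm_axisScaling (he : ‖e‖ = 1) {t : ℝ} (ht : 0 ≤ t) (v : V) :
    t * |inner ℝ e v| ≤ ‖axisScaling e t v‖ := by
  rw [← abs_of_nonneg ht, ← abs_mul, abs_of_nonneg ht, ← inner_axisScaling he]
  simpa [he] using abs_real_inner_le_norm e (axisScaling e t v)

lemma exists_linearMap_det_le_of_not_injective [FiniteDimensional ℝ V] [NormedSpace ℝ W]
    {Λ : V →L[ℝ] W} (hΛ : ¬ Function.Injective Λ) {η : ℝ} (hη : 0 < η) :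
    ∃ ρ : NNReal, ρ ≠ 0 ∧ ∃ B : V →ₗ[ℝ] V, |LinearMap.det B| ≤ η ∧
      ∀ v w, ‖w - Λ v‖ ≤ ρ * ‖v‖ → ‖w‖ ≤ ‖B v‖ := by
  obtain ⟨e, he, hΛe⟩ : ∃ e : V, ‖e‖ = 1 ∧ Λ e = 0 := by
    obtain ⟨u, hΛu, hu⟩ : ∃ u, Λ u = 0 ∧ u ≠ 0 := by
      simpa [injective_iff_map_eq_zero] using hΛ
    exact ⟨‖u‖⁻¹ • u, norm_smul_inv_norm (𝕜 := ℝ) hu, by simp [hΛu]⟩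
  set M : ℝ := ‖Λ‖ + 2
  set t : ℝ := η / M ^ Module.finrank ℝ V
  have hM : 0 < M := by positivity
  have ht : 0 < t := by positivity
  obtain ⟨ρ, hρ⟩ : ∃ ρ : NNReal, (ρ : ℝ) = min 1 t := ⟨⟨min 1 t, by positivity⟩, rfl⟩
  have hρ₀ : 0 < (ρ : ℝ) := hρ ▸ lt_min one_pos ht
  refine ⟨ρ, (NNReal.coe_pos.1 hρ₀).ne', M • axisScaling e t, ?_, fun v w hvw => ?_⟩
  · rw [LinearMap.det_smul, det_axisScaling he, mul_div_cancel₀ _ (by positivity), abs_of_pos hη]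
  set a := inner ℝ e v
  set v' := v - a • e with hv'
  have hΛv : ‖Λ v‖ ≤ ‖Λ‖ * ‖v'‖ := by
    simpa [hv', hΛe] using Λ.le_opNorm v'
  have hv : ‖v‖ ≤ ‖v'‖ + |a| := by
    simpa [hv', norm_smul, he] using norm_add_le v' (a • e)
  have hv'B : ‖v'‖ ≤ ‖axisScaling e t v‖ := norm_sub_inner_smul_le_norm_axisScaling he t v
  have haB : t * |a| ≤ ‖axisScaling e t v‖ := mul_abs_inner_le_norm_axisScaling he ht.le v
  calc ‖w‖ ≤ ‖w - Λ v‖ + ‖Λ v‖ := norm_le_norm_sub_add w (Λ v)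
    _ ≤ ρ * (‖v'‖ + |a|) + ‖Λ‖ * ‖v'‖ := by grw [hvw, hΛv, hv]
    _ ≤ ‖v'‖ + t * |a| + ‖Λ‖ * ‖v'‖ := by
        have := mul_le_mul_of_nonneg_right (hρ.trans_le (min_le_left 1 t)) (norm_nonneg v')
        have := mul_le_mul_of_nonneg_right (hρ.trans_le (min_le_right 1 t)) (abs_nonneg a)
        linarith
    _ ≤ M * ‖axisScaling e t v‖ := by
        have := mul_le_mul_of_nonneg_left hv'B (norm_nonneg Λ)
        linarith [show M * ‖axisScaling e t v‖ = ‖Λ‖ * ‖axisScaling e t v‖ +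
          2 * ‖axisScaling e t v‖ from add_mul _ _ _]
    _ = ‖(M • axisScaling e t) v‖ := by
        rw [LinearMap.smul_apply, norm_smul, Real.norm_of_nonneg hM.le]

end LinearAlgebra

/-! ### Pieces on which a map is nearly linear -/

lemma exists_lipschitzOnWith_comp_eq {α β γ : Type*} [Nonempty α] [PseudoMetricSpace β]
    [MetricSpace γ] {E : Set α} {f : α → γ} {b : α → β} {K : NNReal}
    (h : ∀ x ∈ E, ∀ y ∈ E, dist (f x) (f y) ≤ K * dist (b x) (b y)) :
    ∃ g : β → γ, LipschitzOnWith K g (b '' E) ∧ ∀ x ∈ E, g (b x) = f x := by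
  have hinv (x : α) (hx : x ∈ E) :
      Function.invFunOn b E (b x) ∈ E ∧ b (Function.invFunOn b E (b x)) = b x :=
    Function.invFunOn_pos ⟨x, hx, rfl⟩
  have hcomp (x : α) (hx : x ∈ E) : f (Function.invFunOn b E (b x)) = f x := by
    refine dist_le_zero.1 ((h _ (hinv x hx).1 x hx).trans_eq ?_)
    rw [(hinv x hx).2, dist_self, mul_zero]
  refine ⟨f ∘ Function.invFunOn b E, LipschitzOnWith.of_dist_le_mul ?_, hcomp⟩
  rintro _ ⟨x, hx, rfl⟩ _ ⟨y, hy, rfl⟩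
  simpa only [Function.comp_apply, hcomp x hx, hcomp y hy] using h x hx y hy

lemma exists_partition_of_approximatesLinearOn {V W : Type*} [NormedAddCommGroup V]
    [NormedSpace ℝ V] [FiniteDimensional ℝ V] [MeasurableSpace V] [BorelSpace V]
    [NormedAddCommGroup W] [NormedSpace ℝ W] [FiniteDimensional ℝ W] {f : V → W} {s : Set V}
    (hs : MeasurableSet s) (hf : ∀ x ∈ s, DifferentiableAt ℝ f x) {p : Set V → Prop} (hp₀ : p ∅)
    (hp : ∀ x ∈ s, ∃ ρ : NNReal, ρ ≠ 0 ∧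
      ∀ E, ApproximatesLinearOn f (fderiv ℝ f x) E ρ → p E) :
    ∃ E : ℕ → Set V, Pairwise (Function.onFun Disjoint E) ∧ (∀ i, MeasurableSet (E i)) ∧
      ⋃ i, E i = s ∧ ∀ i, p (E i) := by
  rcases s.eq_empty_or_nonempty with rfl | hne
  · exact ⟨fun _ => ∅, fun _ _ _ => disjoint_bot_left, fun _ => .empty, Set.iUnion_empty,
      fun _ => hp₀⟩
  have hr (Λ : V →L[ℝ] W) : ∃ ρ : NNReal, ρ ≠ 0 ∧
      ((∃ x ∈ s, fderiv ℝ f x = Λ) → ∀ E, ApproximatesLinearOn f Λ E ρ → p E) := by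
    by_cases hΛ : ∃ x ∈ s, fderiv ℝ f x = Λ
    · obtain ⟨x, hx, rfl⟩ := hΛ
      obtain ⟨ρ, hρ, hρE⟩ := hp x hx
      exact ⟨ρ, hρ, fun _ => hρE⟩
    · exact ⟨1, one_ne_zero, fun h => absurd h hΛ⟩
  choose r hr₀ hr using hr
  obtain ⟨t, Λ, ht_disj, ht_meas, ht_cover, ht_approx, hΛ⟩ :=
    exists_partition_approximatesLinearOn_of_hasFDerivWithinAt f s (fderiv ℝ f)
      (fun x hx => (hf x hx).hasFDerivAt.hasFDerivWithinAt) r hr₀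
  refine ⟨fun i => s ∩ t i, fun i j hij => (ht_disj hij).mono Set.inter_subset_right
    Set.inter_subset_right, fun i => hs.inter (ht_meas i), ?_, fun i => ?_⟩
  · rw [← Set.inter_iUnion, Set.inter_eq_left.2 ht_cover]
  · obtain ⟨x, hx, hxΛ⟩ := hΛ hne i
    exact hr _ ⟨x, hx, hxΛ.symm⟩ _ (ht_approx i)

lemma exists_isCompact_measure_iUnion_sdiff_le {X : Type*} [TopologicalSpace X] [MeasurableSpace X]
    [OpensMeasurableSpace X] [T2Space X]
    {μ : Measure X} [μ.InnerRegularCompactLTTop] {B : ℕ → Set X}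
    (hB : ∀ i, MeasurableSet (B i)) (hBd : Pairwise (Function.onFun Disjoint B))
    (hμB : μ (⋃ i, B i) ≠ ⊤) {η : ENNReal} (hη : η ≠ 0) :
    ∃ (m : ℕ) (P : ℕ → Set X), (∀ i, IsCompact (P i) ∧ P i ⊆ B i) ∧
      μ ((⋃ i, B i) \ ⋃ i ∈ Finset.range m, P i) ≤ η := by
  have hη₂ : η / 2 ≠ 0 := (ENNReal.half_pos hη).ne'
  obtain ⟨m, hm⟩ : ∃ m, μ (⋃ i ∈ Set.Ici m, B i) ≤ η / 2 := by
    have : IsFiniteMeasure (μ.restrict (⋃ i, B i)) := ⟨by simpa using hμB.lt_top⟩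
    obtain ⟨m, hm⟩ := ((tendsto_measure_biUnion_Ici_zero_of_pairwise_disjoint
      (μ := μ.restrict (⋃ i, B i)) (fun i => (hB i).nullMeasurableSet) hBd).eventually_le_const
      hη₂.bot_lt).exists
    exact ⟨m, (Measure.restrict_eq_self μ (Set.iUnion₂_subset fun i _ =>
      Set.subset_iUnion B i)).symm.trans_le hm⟩
  obtain ⟨ε, hε, hε_sum⟩ := ENNReal.exists_pos_sum_of_countable' hη₂ ℕ
  choose P hPB hP hPε using fun i =>
    (hB i).exists_isCompact_sdiff_lt
      (measure_ne_top_of_subset (Set.subset_iUnion B i) hμB) (hε i).ne'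
  refine ⟨m, P, fun i => ⟨hP i, hPB i⟩, ?_⟩
  have hsub : (⋃ i, B i) \ ⋃ i ∈ Finset.range m, P i ⊆
      (⋃ i ∈ Set.Ici m, B i) ∪ ⋃ i, B i \ P i := by
    rintro x ⟨hx, hxP⟩
    obtain ⟨i, hi⟩ := Set.mem_iUnion.1 hx
    rcases lt_or_ge i m with him | him
    · exact .inr (Set.mem_iUnion.2 ⟨i, hi, fun hiP =>
        hxP (Set.mem_biUnion (Finset.mem_range.2 him) hiP)⟩)
    · exact .inl (Set.mem_biUnion him hi)
  calc μ ((⋃ i, B i) \ ⋃ i ∈ Finset.range m, P i)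
      ≤ μ (⋃ i ∈ Set.Ici m, B i) + ∑' i, μ (B i \ P i) :=
        (measure_mono hsub).trans ((measure_union_le _ _).trans
          (add_le_add_right (measure_iUnion_le _) _))
    _ ≤ η / 2 + ∑' i, ε i := add_le_add hm (ENNReal.tsum_le_tsum fun i => (hPε i).le)
    _ ≤ η := by grw [hε_sum, ENNReal.add_halves]

/-- A subset of `ℝ^d` is nearly flat, with constant `L`, if it is `L`-bi-Lipschitz equivalent to a
subset of `ℝ^n`; only the values of the chart on the set matter. -/
def IsNearlyFlat {d : ℕ} (n : ℕ) (L : NNReal) (C : Set (𝔼 d)) : Prop :=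
  ∃ k : 𝔼 d → 𝔼 n, LipschitzOnWith L k C ∧ ∀ x ∈ C, ∀ y ∈ C, dist x y ≤ L * dist (k x) (k y)

namespace IsNearlyFlat

variable {n d : ℕ} {L : NNReal} {P : Set (𝔼 d)}

lemma mono {P' : Set (𝔼 d)} (h : IsNearlyFlat n L P) (hP : P' ⊆ P) : IsNearlyFlat n L P' := by
  obtain ⟨k, hk, hk'⟩ := h
  exact ⟨k, hk.mono hP, fun x hx y hy => hk' x (hP hx) y (hP hy)⟩

lemma of_dist_le {E : Set (𝔼 n)} {f : 𝔼 n → 𝔼 d} {T : 𝔼 n → 𝔼 n}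
    (hfT : ∀ x ∈ E, ∀ y ∈ E, dist (f x) (f y) ≤ L * dist (T x) (T y))
    (hTf : ∀ x ∈ E, ∀ y ∈ E, dist (T x) (T y) ≤ L * dist (f x) (f y)) :
    IsNearlyFlat n L (f '' E) := by
  obtain ⟨k, hk, hkf⟩ := exists_lipschitzOnWith_comp_eq hTf
  refine ⟨k, hk, ?_⟩
  rintro _ ⟨x, hx, rfl⟩ _ ⟨y, hy, rfl⟩
  rw [hkf x hx, hkf y hy]
  exact hfT x hx y hy

lemma exists_lipschitzOnWith_charts (h : IsNearlyFlat n L P) :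
    ∃ (k : 𝔼 d → 𝔼 n) (g : 𝔼 n → 𝔼 d), LipschitzOnWith L k P ∧
      LipschitzOnWith L g (k '' P) ∧ g '' (k '' P) = P := by
  obtain ⟨k, hk, hk'⟩ := h
  obtain ⟨g, hg, hgk⟩ := exists_lipschitzOnWith_comp_eq (f := id) hk'
  exact ⟨k, g, hk, hg, by rw [Set.image_image, Set.image_congr hgk, Set.image_id]⟩

variable (A : PackingBoundFunction)

lemma cubeDensity_mul_le (h : IsNearlyFlat n L P) (hP : IsCompact P) (hL : L ≠ 0) :
    A.cubeDensity n * normHausdorff n d P ≤ (L : ENNReal) ^ (2 * n) * A.lowerDensity n P := by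
  obtain ⟨k, g, hk, hg, hgk⟩ := h.exists_lipschitzOnWith_charts
  have hkP : IsCompact (k '' P) := hP.image_of_continuousOn hk.continuousOn
  calc A.cubeDensity n * normHausdorff n d P
      ≤ A.cubeDensity n * ((L : ENNReal) ^ n * volume (k '' P)) := by
        gcongr
        simpa only [hgk, normHausdorff_self] using normHausdorff_image_le (n := n) hg
    _ = (L : ENNReal) ^ n * (A.cubeDensity n * volume (k '' P)) := mul_left_comm _ _ _
    _ ≤ (L : ENNReal) ^ n * ((L : ENNReal) ^ n * A.lowerDensity n P) := by
        grw [A.cubeDensity_mul_le_lowerDensity hkP,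
          A.lowerDensity_image_le hk (.of_isCompact hP) (.of_isCompact hkP) hL]
    _ = (L : ENNReal) ^ (2 * n) * A.lowerDensity n P := by ring

lemma upperDensity_le (h : IsNearlyFlat n L P) (hP : IsCompact P) (hL : L ≠ 0) :
    A.upperDensity n P ≤ (L : ENNReal) ^ (2 * n) * (A.cubeDensity n * normHausdorff n d P) := by
  obtain ⟨k, g, hk, hg, hgk⟩ := h.exists_lipschitzOnWith_charts
  have hkP : IsCompact (k '' P) := hP.image_of_continuousOn hk.continuousOn
  calc A.upperDensity n P = A.upperDensity n (g '' (k '' P)) := by rw [hgk]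
    _ ≤ (L : ENNReal) ^ n * A.upperDensity n (k '' P) :=
        A.upperDensity_image_le hg (.of_isCompact hkP) (hgk.symm ▸ .of_isCompact hP) hL
    _ ≤ (L : ENNReal) ^ n * (A.cubeDensity n * ((L : ENNReal) ^ n * normHausdorff n d P)) := by
        grw [A.upperDensity_le_cubeDensity_mul hkP, ← normHausdorff_self,
          normHausdorff_image_le hk]
    _ = (L : ENNReal) ^ (2 * n) * (A.cubeDensity n * normHausdorff n d P) := by ring

end IsNearlyFlat

/-! ### Regular and critical parts of a Lipschitz map -/

/-- The points at which `f` has an injective derivative. -/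
def regularPoints {V W : Type*} [NormedAddCommGroup V] [NormedSpace ℝ V] [NormedAddCommGroup W]
    [NormedSpace ℝ W] (f : V → W) : Set V :=
  {x | DifferentiableAt ℝ f x ∧ Function.Injective (fderiv ℝ f x)}

lemma measurableSet_regularPoints {V W : Type*} [NormedAddCommGroup V] [NormedSpace ℝ V]
    [FiniteDimensional ℝ V] [MeasurableSpace V] [BorelSpace V] [NormedAddCommGroup W]
    [NormedSpace ℝ W] [CompleteSpace W] (f : V → W) : MeasurableSet (regularPoints f) :=
  (measurableSet_of_differentiableAt ℝ f).inter
    (ContinuousLinearMap.isOpen_injective.measurableSet.preimage (measurable_fderiv ℝ f))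

section RegularPoints

variable {n d : ℕ} {f : 𝔼 n → 𝔼 d} {s : Set (𝔼 n)}

lemma exists_partition_isNearlyFlat_image (hs : MeasurableSet s) (hsf : s ⊆ regularPoints f)
    {L : NNReal} (hL : 1 < L) :
    ∃ E : ℕ → Set (𝔼 n), Pairwise (Function.onFun Disjoint E) ∧ (∀ i, MeasurableSet (E i)) ∧
      ⋃ i, E i = s ∧ ∀ i, Set.InjOn f (E i) ∧ IsNearlyFlat n L (f '' E i) := by
  refine exists_partition_of_approximatesLinearOn hs (fun x hx => (hsf hx).1)
    (p := fun E => Set.InjOn f E ∧ IsNearlyFlat n L (f '' E))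
    ⟨Set.injOn_empty f, IsNearlyFlat.of_dist_le (T := id) (by simp) (by simp)⟩ fun x hx => ?_
  obtain ⟨ρ, hρ, T, hT, hTL⟩ := exists_linearMap_nearly_isometric (hsf hx).2
    (NNReal.one_lt_coe.2 hL)
  refine ⟨ρ, hρ, fun E hE => ?_⟩
  have hfT (y) (hy : y ∈ E) (z) (hz : z ∈ E) :
      dist (f y) (f z) ≤ L * dist (T y) (T z) ∧ dist (T y) (T z) ≤ L * dist (f y) (f z) := by
    simpa only [dist_eq_norm, map_sub] using hTL (y - z) (f y - f z) (hE y hy z hz)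
  refine ⟨fun y hy z hz hyz => hT (dist_le_zero.1 ?_),
    .of_dist_le (fun y hy z hz => (hfT y hy z hz).1) fun y hy z hz => (hfT y hy z hz).2⟩
  simpa only [hyz, dist_self, mul_zero] using (hfT y hy z hz).2

lemma exists_isCompact_isNearlyFlat_measure_sdiff_le (hf : Continuous f) (hs : MeasurableSet s)
    (hsf : s ⊆ regularPoints f) {L : NNReal} (hL : 1 < L) (μ : Measure (𝔼 d)) [IsFiniteMeasure μ]
    {η : ENNReal} (hη : η ≠ 0) :
    ∃ (T : Finset ℕ) (P : ℕ → Set (𝔼 d)), Pairwise (Function.onFun Disjoint P) ∧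
      (∀ i, IsCompact (P i) ∧ IsNearlyFlat n L (P i) ∧ P i ⊆ f '' s) ∧
      μ (f '' s \ ⋃ i ∈ T, P i) ≤ η := by
  obtain ⟨E, -, hE, hEs, hEf⟩ := exists_partition_isNearlyFlat_image hs hsf hL
  have hG (i : ℕ) : MeasurableSet (disjointed (fun i => f '' E i) i) :=
    MeasurableSet.disjointed (fun i =>
      (hE i).image_of_continuousOn_injOn hf.continuousOn (hEf i).1) i
  obtain ⟨m, P, hP, hPμ⟩ :=
    exists_isCompact_measure_iUnion_sdiff_le (μ := μ) hG (disjoint_disjointed _)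
      (measure_ne_top μ _) hη
  have hP_sub (i : ℕ) : P i ⊆ f '' E i := (hP i).2.trans (disjointed_subset _ i)
  have hEs_sub (i : ℕ) : E i ⊆ s := hEs ▸ Set.subset_iUnion E i
  refine ⟨Finset.range m, P, fun i j hij =>
    (disjoint_disjointed _ hij).mono (hP i).2 (hP j).2, fun i => ⟨(hP i).1,
      (hEf i).2.mono (hP_sub i), (hP_sub i).trans (Set.image_mono (hEs_sub i))⟩, ?_⟩
  rwa [iUnion_disjointed, ← Set.image_iUnion, hEs] at hPμ

lemma normHausdorff_image_le_of_dist_le {B : 𝔼 n → 𝔼 n}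
    (hfB : ∀ x ∈ s, ∀ y ∈ s, dist (f x) (f y) ≤ dist (B x) (B y)) :
    normHausdorff n d (f '' s) ≤ volume (B '' s) := by
  obtain ⟨g, hg, hgB⟩ := exists_lipschitzOnWith_comp_eq (K := 1) (by simpa using hfB)
  have hle := normHausdorff_image_le (n := n) hg
  rwa [Set.image_image, Set.image_congr hgB, normHausdorff_self, ENNReal.coe_one, one_pow,
    one_mul] at hle

lemma PackingBoundFunction.upperDensity_image_le_of_dist_le (A : PackingBoundFunction)
    {B : 𝔼 n → 𝔼 n} (hs : IsCompact s) (hf : Continuous f) (hB : Continuous B)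
    (hfB : ∀ x ∈ s, ∀ y ∈ s, dist (f x) (f y) ≤ dist (B x) (B y)) :
    A.upperDensity n (f '' s) ≤ A.cubeDensity n * volume (B '' s) := by
  obtain ⟨g, hg, hgB⟩ := exists_lipschitzOnWith_comp_eq (K := 1) (by simpa using hfB)
  have hgs : g '' (B '' s) = f '' s := by rw [Set.image_image, Set.image_congr hgB]
  have hle := A.upperDensity_image_le (n := n) hg (.of_isCompact (hs.image hB))
    (hgs.symm ▸ .of_isCompact (hs.image hf)) one_ne_zero
  rw [hgs, ENNReal.coe_one, one_pow, one_mul] at hle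
  exact hle.trans (A.upperDensity_le_cubeDensity_mul (hs.image hB))

lemma exists_partition_dist_le_of_not_injective (hs : MeasurableSet s)
    (hsf : ∀ x ∈ s, DifferentiableAt ℝ f x ∧ ¬ Function.Injective (fderiv ℝ f x)) {η : NNReal}
    (hη : 0 < η) :
    ∃ E : ℕ → Set (𝔼 n), Pairwise (Function.onFun Disjoint E) ∧ (∀ i, MeasurableSet (E i)) ∧
      ⋃ i, E i = s ∧ ∀ i, ∃ B : 𝔼 n → 𝔼 n, Continuous B ∧
        (∀ x ∈ E i, ∀ y ∈ E i, dist (f x) (f y) ≤ dist (B x) (B y)) ∧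
        ∀ P ⊆ E i, volume (B '' P) ≤ η * volume P := by
  refine exists_partition_of_approximatesLinearOn hs (fun x hx => (hsf x hx).1)
    (p := fun E => ∃ B : 𝔼 n → 𝔼 n, Continuous B ∧
      (∀ x ∈ E, ∀ y ∈ E, dist (f x) (f y) ≤ dist (B x) (B y)) ∧
      ∀ P ⊆ E, volume (B '' P) ≤ η * volume P)
    ⟨id, continuous_id, by simp, by simp [Set.subset_empty_iff]⟩ fun x hx => ?_
  obtain ⟨ρ, hρ, B, hB, hfB⟩ := exists_linearMap_det_le_of_not_injective (hsf x hx).2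
    (NNReal.coe_pos.2 hη)
  refine ⟨ρ, hρ, fun E hE => ⟨B, B.continuous_of_finiteDimensional, fun y hy z hz => ?_,
    fun P _ => ?_⟩⟩
  · simpa only [dist_eq_norm, map_sub] using hfB (y - z) (f y - f z) (hE y hy z hz)
  · grw [Measure.addHaar_image_linearMap, hB, ENNReal.ofReal_coe_nnreal]

lemma exists_measurableSet_differentiableAt_sdiff_regularPoints {K : NNReal}
    (hf : LipschitzWith K f) (hs : MeasurableSet s) (hsf : Disjoint s (regularPoints f)) :
    ∃ s' ⊆ s, MeasurableSet s' ∧ volume (s \ s') = 0 ∧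
      ∀ x ∈ s', DifferentiableAt ℝ f x ∧ ¬ Function.Injective (fderiv ℝ f x) := by
  refine ⟨s ∩ {x | DifferentiableAt ℝ f x}, Set.inter_subset_left,
    hs.inter (measurableSet_of_differentiableAt ℝ f), ?_, fun x hx =>
      ⟨hx.2, fun hinj => Set.disjoint_left.1 hsf hx.1 ⟨hx.2, hinj⟩⟩⟩
  refine measure_mono_null ?_ hf.ae_differentiableAt
  exact fun x hx hdiff => hx.2 ⟨hx.1, hdiff⟩

lemma ennreal_eq_zero_of_forall_le_mul {a M : ENNReal} (hM : M ≠ ⊤)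
    (h : ∀ η : NNReal, 0 < η → a ≤ η * M) : a = 0 := by
  have hlim : Tendsto (fun η : NNReal => (η : ENNReal) * M) (nhdsWithin 0 (Set.Ioi 0))
      (nhds 0) := by
    refine tendsto_nhdsWithin_of_tendsto_nhds ?_
    simpa using ENNReal.Tendsto.mul_const
      (ENNReal.tendsto_coe.2 (tendsto_id (x := nhds (0 : NNReal)))) (.inr hM)
  exact nonpos_iff_eq_zero.1 (ge_of_tendsto hlim (eventually_mem_nhdsWithin.mono h))

lemma normHausdorff_image_eq_zero {K : NNReal} (hf : LipschitzWith K f)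
    (hs : MeasurableSet s) (hs_top : volume s ≠ ⊤) (hsf : Disjoint s (regularPoints f)) :
    normHausdorff n d (f '' s) = 0 := by
  obtain ⟨s', hs's, hs', hnull, hsf'⟩ :=
    exists_measurableSet_differentiableAt_sdiff_regularPoints hf hs hsf
  refine ennreal_eq_zero_of_forall_le_mul hs_top fun η hη => ?_
  obtain ⟨E, hEd, hE, hEs', hEf⟩ := exists_partition_dist_le_of_not_injective hs' hsf' hη
  choose B _ hfB hBη using hEf
  have hnull_image : normHausdorff n d (f '' (s \ s')) = 0 := by
    simpa [normHausdorff_self, hnull] using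
      normHausdorff_image_le (n := n) (hf.lipschitzOnWith (s := s \ s'))
  calc normHausdorff n d (f '' s)
      ≤ normHausdorff n d (⋃ i, f '' E i) + normHausdorff n d (f '' (s \ s')) := by
        rw [← Set.image_iUnion, hEs', ← Set.union_sdiff_cancel hs's, Set.image_union,
          Set.union_sdiff_cancel hs's]
        exact measure_union_le _ _
    _ ≤ ∑' i, η * volume (E i) := by
        rw [hnull_image, add_zero]
        exact (measure_iUnion_le _).trans
          (ENNReal.tsum_le_tsum fun i => (normHausdorff_image_le_of_dist_le (hfB i)).trans
            (hBη i _ subset_rfl))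
    _ = η * volume s' := by rw [ENNReal.tsum_mul_left, ← measure_iUnion hEd hE, hEs']
    _ ≤ η * volume s := by gcongr

lemma PackingBoundFunction.exists_isCompact_upperDensity_image_le_of_not_injective
    (A : PackingBoundFunction) (hf : Continuous f) (hs : MeasurableSet s) (hs_top : volume s ≠ ⊤)
    (hsf : ∀ x ∈ s, DifferentiableAt ℝ f x ∧ ¬ Function.Injective (fderiv ℝ f x)) {η : NNReal}
    (hη : 0 < η) {ζ : ENNReal} (hζ : ζ ≠ 0) :
    ∃ F ⊆ s, IsCompact F ∧ volume (s \ F) ≤ ζ ∧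
      A.upperDensity n (f '' F) ≤ η * (A.cubeDensity n * volume s) := by
  obtain ⟨E, hEd, hE, hEs, hEf⟩ := exists_partition_dist_le_of_not_injective hs hsf hη
  choose B hB hfB hBη using hEf
  obtain ⟨m, P, hP, hPζ⟩ := exists_isCompact_measure_iUnion_sdiff_le hE hEd (by rwa [hEs]) hζ
  rw [hEs] at hPζ
  have hPs : ⋃ i ∈ Finset.range m, P i ⊆ s := Set.iUnion₂_subset fun i _ =>
    (hP i).2.trans (hEs ▸ Set.subset_iUnion E i)
  refine ⟨_, hPs, (Finset.range m).isCompact_biUnion fun i _ => (hP i).1, hPζ, ?_⟩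
  calc A.upperDensity n (f '' ⋃ i ∈ Finset.range m, P i)
      ≤ ∑ i ∈ Finset.range m, A.upperDensity n (f '' P i) := by
        rw [Set.image_iUnion₂]
        exact A.upperDensity_biUnion_le fun i _ => .of_isCompact ((hP i).1.image hf)
    _ ≤ ∑ i ∈ Finset.range m, A.cubeDensity n * (η * volume (P i)) := by
        gcongr with i
        grw [A.upperDensity_image_le_of_dist_le (hP i).1 hf (hB i) fun x hx y hy =>
          hfB i x ((hP i).2 hx) y ((hP i).2 hy), hBη i _ (hP i).2]
    _ = η * (A.cubeDensity n * volume (⋃ i ∈ Finset.range m, P i)) := by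
        rw [measure_biUnion_finset (fun i _ j _ hij => (hEd hij).mono (hP i).2 (hP j).2)
          fun i _ => (hP i).1.measurableSet]
        simp only [← Finset.mul_sum, mul_left_comm]
    _ ≤ η * (A.cubeDensity n * volume s) := by gcongr

lemma PackingBoundFunction.upperDensity_image_eq_zero (A : PackingBoundFunction) {K : NNReal}
    (hf : LipschitzWith K f) (hs : IsCompact s) (hsf : Disjoint s (regularPoints f)) :
    A.upperDensity n (f '' s) = 0 := by
  obtain ⟨s', hs's, hs', hnull, hsf'⟩ :=
    exists_measurableSet_differentiableAt_sdiff_regularPoints hf hs.measurableSet hsf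
  have htop : volume s' ≠ ⊤ := measure_ne_top_of_subset hs's hs.measure_lt_top.ne
  refine ennreal_eq_zero_of_forall_le_mul
    (ENNReal.mul_ne_top (A.cubeDensity_ne_top (n := n)) htop)
    fun η hη => A.upperDensity_image_le_of_approx hf hs fun ζ hζ => ?_
  obtain ⟨F, -, hF, hFζ, hFη⟩ := A.exists_isCompact_upperDensity_image_le_of_not_injective
    hf.continuous hs' htop hsf' hη hζ
  refine ⟨f '' F, hF.image hf.continuous, ?_, hFη⟩
  calc volume (s \ f ⁻¹' (f '' F)) ≤ volume (s \ F) := by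
        gcongr
        exact Set.subset_preimage_image f F
    _ ≤ volume (s \ s') + volume (s' \ F) :=
        (measure_mono (sdiff_triangle s s' F)).trans (measure_union_le _ _)
    _ ≤ ζ := by rwa [hnull, zero_add]

end RegularPoints

/-! ### The limit -/

section RectifiableImage

variable {n d : ℕ} {f : 𝔼 n → 𝔼 d} {K : NNReal} {S : Set (𝔼 n)}

lemma exists_isCompact_image_eq {X Y : Type*} [PseudoMetricSpace X] [ProperSpace X]
    [TopologicalSpace Y] {f : X → Y} {E : Set X} (hf : Continuous f) (hE : IsBounded E)
    (hfE : IsClosed (f '' E)) : ∃ S, IsCompact S ∧ f '' S = f '' E :=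
  ⟨closure E ∩ f ⁻¹' (f '' E), hE.isCompact_closure.inter_right (hfE.preimage hf),
    Set.Subset.antisymm (Set.image_subset_iff.2 Set.inter_subset_right)
      (Set.image_mono fun _ hx => ⟨subset_closure hx, Set.mem_image_of_mem f hx⟩)⟩

lemma normHausdorff_image_ne_top (hf : LipschitzWith K f) (hS : IsCompact S) :
    normHausdorff n d (f '' S) ≠ ⊤ := by
  refine ne_top_of_le_ne_top ?_ (normHausdorff_image_le hf.lipschitzOnWith)
  rw [normHausdorff_self]
  exact ENNReal.mul_ne_top (by simp) hS.measure_lt_top.ne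

lemma exists_isCompact_isNearlyFlat_normHausdorff_le (hf : LipschitzWith K f) (hS : IsCompact S)
    {L : NNReal} (hL : 1 < L) {η : ENNReal} (hη : η ≠ 0) :
    ∃ (T : Finset ℕ) (P : ℕ → Set (𝔼 d)), Pairwise (Function.onFun Disjoint P) ∧
      (∀ i, IsCompact (P i) ∧ IsNearlyFlat n L (P i) ∧ P i ⊆ f '' S) ∧
      normHausdorff n d (f '' S) ≤ normHausdorff n d (⋃ i ∈ T, P i) + η := by
  set D := S ∩ regularPoints f
  have hD : MeasurableSet D := hS.measurableSet.inter (measurableSet_regularPoints f)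
  have hDS : f '' D ⊆ f '' S := Set.image_mono Set.inter_subset_left
  have hcrit : normHausdorff n d (f '' (S \ D)) = 0 := by
    refine normHausdorff_image_eq_zero hf (hS.measurableSet.diff hD)
      (measure_ne_top_of_subset Set.sdiff_subset hS.measure_lt_top.ne) ?_
    exact Set.disjoint_left.2 fun x hx hxf => hx.2 ⟨hx.1, hxf⟩
  have : IsFiniteMeasure ((normHausdorff n d).restrict (f '' S)) :=
    ⟨by simpa using (normHausdorff_image_ne_top hf hS).lt_top⟩
  obtain ⟨T, P, hPd, hP, hPη⟩ := exists_isCompact_isNearlyFlat_measure_sdiff_le hf.continuous hD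
    Set.inter_subset_right hL ((normHausdorff n d).restrict (f '' S)) hη
  rw [Measure.restrict_eq_self _ (Set.sdiff_subset.trans hDS)] at hPη
  refine ⟨T, P, hPd, fun i => ⟨(hP i).1, (hP i).2.1, (hP i).2.2.trans hDS⟩, ?_⟩
  calc normHausdorff n d (f '' S)
      ≤ normHausdorff n d (f '' D) + normHausdorff n d (f '' (S \ D)) := by
        refine (measure_mono ?_).trans (measure_union_le _ _)
        rw [← Set.image_union, Set.union_sdiff_cancel Set.inter_subset_left]
    _ ≤ normHausdorff n d (⋃ i ∈ T, P i) + η := by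
        grw [hcrit, add_zero, ← hPη]
        exact tsub_le_iff_left.1 le_measure_sdiff

end RectifiableImage

namespace PackingBoundFunction

variable (A : PackingBoundFunction) {n d : ℕ} {f : 𝔼 n → 𝔼 d} {K : NNReal} {S : Set (𝔼 n)}

theorem cubeDensity_mul_normHausdorff_le_lowerDensity_image (hf : LipschitzWith K f)
    (hS : IsCompact S) :
    A.cubeDensity n * normHausdorff n d (f '' S) ≤ A.lowerDensity n (f '' S) := by
  refine ennreal_le_of_forall_exists_le_add (2 * n) fun L hL =>
    ⟨A.cubeDensity n, A.cubeDensity_ne_top, fun η hη => ?_⟩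
  obtain ⟨T, P, hPd, hP, hPη⟩ := exists_isCompact_isNearlyFlat_normHausdorff_le hf hS hL hη
  have hPS : ⋃ i ∈ T, P i ⊆ f '' S := Set.iUnion₂_subset fun i _ => (hP i).2.2
  calc A.cubeDensity n * normHausdorff n d (f '' S)
      ≤ ∑ i ∈ T, A.cubeDensity n * normHausdorff n d (P i) + A.cubeDensity n * η := by
        grw [hPη, measure_biUnion_finset_le, mul_add, Finset.mul_sum]
    _ ≤ ∑ i ∈ T, (L : ENNReal) ^ (2 * n) * A.lowerDensity n (P i) + A.cubeDensity n * η := by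
        gcongr ∑ i ∈ T, ?_ + _ with i
        exact (hP i).2.1.cubeDensity_mul_le A (hP i).1 (zero_lt_one.trans hL).ne'
    _ ≤ (L : ENNReal) ^ (2 * n) * A.lowerDensity n (⋃ i ∈ T, P i) + A.cubeDensity n * η := by
        grw [← Finset.mul_sum, A.sum_lowerDensity_le (fun i _ => (hP i).1) (hPd.set_pairwise _)]
    _ ≤ (L : ENNReal) ^ (2 * n) * A.lowerDensity n (f '' S) + A.cubeDensity n * η := by
        grw [A.lowerDensity_mono (.of_isCompact (T.isCompact_biUnion fun i _ => (hP i).1))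
          (.of_isCompact (hS.image hf.continuous)) hPS]

lemma upperDensity_biUnion_le_of_isNearlyFlat {T : Finset ℕ} {P : ℕ → Set (𝔼 d)} {L : NNReal}
    (hPd : Pairwise (Function.onFun Disjoint P))
    (hP : ∀ i, IsCompact (P i) ∧ IsNearlyFlat n L (P i)) (hL : L ≠ 0) :
    A.upperDensity n (⋃ i ∈ T, P i) ≤
      (L : ENNReal) ^ (2 * n) * (A.cubeDensity n * normHausdorff n d (⋃ i ∈ T, P i)) := by
  rw [measure_biUnion_finset (hPd.set_pairwise _) fun i _ => (hP i).1.measurableSet,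
    Finset.mul_sum, Finset.mul_sum]
  refine (A.upperDensity_biUnion_le fun i _ => .of_isCompact (hP i).1).trans ?_
  gcongr with i
  exact (hP i).2.upperDensity_le A (hP i).1 hL

theorem upperDensity_image_le_cubeDensity_mul_normHausdorff (hf : LipschitzWith K f)
    (hS : IsCompact S) :
    A.upperDensity n (f '' S) ≤ A.cubeDensity n * normHausdorff n d (f '' S) := by
  set D := S ∩ regularPoints f
  have hD : MeasurableSet D := hS.measurableSet.inter (measurableSet_regularPoints f)
  have hSD : volume (S \ D) ≠ ⊤ :=
    measure_ne_top_of_subset Set.sdiff_subset hS.measure_lt_top.ne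
  have : IsFiniteMeasure (volume.restrict D) :=
    ⟨by simpa using measure_lt_top_of_subset Set.inter_subset_left hS.measure_lt_top.ne⟩
  refine ennreal_le_of_forall_le_pow_mul (2 * n) fun L hL =>
    A.upperDensity_image_le_of_approx hf hS fun η hη => ?_
  have hη₂ : η / 2 ≠ 0 := (ENNReal.half_pos hη).ne'
  obtain ⟨T, P, hPd, hP, hPη⟩ := exists_isCompact_isNearlyFlat_measure_sdiff_le hf.continuous hD
    Set.inter_subset_right hL ((volume.restrict D).map f) hη₂
  obtain ⟨Z, hZD, hZ, hZη⟩ :=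
    (hS.measurableSet.diff hD).exists_isCompact_sdiff_lt hSD hη₂
  set F := ⋃ i ∈ T, P i
  have hF : IsCompact F := T.isCompact_biUnion fun i _ => (hP i).1
  have hfZ : IsCompact (f '' Z) := hZ.image hf.continuous
  refine ⟨F ∪ f '' Z, hF.union hfZ, ?_, ?_⟩
  · have hDF : volume (D \ f ⁻¹' F) ≤ η / 2 := by
      refine (Measure.le_map_apply hf.continuous.aemeasurable _).trans' ?_ |>.trans hPη
      rw [Measure.restrict_apply' hD]
      exact measure_mono fun x hx => ⟨⟨Set.mem_image_of_mem f hx.1, hx.2⟩, hx.1⟩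
    have hsub : S \ f ⁻¹' (F ∪ f '' Z) ⊆ D \ f ⁻¹' F ∪ (S \ D) \ Z := by
      rintro x ⟨hxS, hx⟩
      by_cases hxD : x ∈ D
      · exact .inl ⟨hxD, fun hxF => hx (.inl hxF)⟩
      · exact .inr ⟨⟨hxS, hxD⟩, fun hxZ => hx (.inr (Set.mem_image_of_mem f hxZ))⟩
    calc volume (S \ f ⁻¹' (F ∪ f '' Z)) ≤ volume (D \ f ⁻¹' F) + volume ((S \ D) \ Z) :=
          (measure_mono hsub).trans (measure_union_le _ _)
      _ ≤ η := by grw [hDF, hZη, ENNReal.add_halves]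
  · have hfZ₀ : A.upperDensity n (f '' Z) = 0 := A.upperDensity_image_eq_zero hf hZ <|
      Set.disjoint_left.2 fun x hx hxf => (hZD hx).2 ⟨(hZD hx).1, hxf⟩
    have hFS : F ⊆ f '' S := Set.iUnion₂_subset fun i _ =>
      (hP i).2.2.trans (Set.image_mono Set.inter_subset_left)
    grw [A.upperDensity_union_le (.of_isCompact hF) (.of_isCompact hfZ), hfZ₀, add_zero,
      A.upperDensity_biUnion_le_of_isNearlyFlat hPd (fun i => ⟨(hP i).1, (hP i).2.1⟩)
        (zero_lt_one.trans hL).ne']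
    gcongr

theorem tendsto_ratio_image (hf : LipschitzWith K f) (hS : IsCompact S) :
    Tendsto (A.ratio n (f '' S)) atTop
      (nhds (A.cubeDensity n * normHausdorff n d (f '' S))) :=
  tendsto_of_le_liminf_of_limsup_le (A.cubeDensity_mul_normHausdorff_le_lowerDensity_image hf hS)
    (A.upperDensity_image_le_cubeDensity_mul_normHausdorff hf hS)

theorem tendsto_apply_smul_image_div_pow (hf : LipschitzWith K f) (hS : IsCompact S) :
    Tendsto (fun r => A.toFun d (r • f '' S) / r ^ n) atTop
      (nhds ((A.cubeDensity n).toReal * (normHausdorff n d (f '' S)).toReal)) := by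
  rw [← ENNReal.toReal_mul]
  refine ((ENNReal.tendsto_toReal (ENNReal.mul_ne_top A.cubeDensity_ne_top
    (normHausdorff_image_ne_top hf hS))).comp (A.tendsto_ratio_image hf hS)).congr' ?_
  filter_upwards [eventually_gt_atTop 0] with r hr
  have hfS := (IsBoundedBorel.of_isCompact (hS.image hf.continuous)).smul r
  exact ENNReal.toReal_ofReal
    (div_nonneg (A.nonneg d _ hfS.isBounded hfS.measurableSet) (by positivity))

theorem pbfDensity_eq : pbfDensity A n = (A.cubeDensity n).toReal := by
  have hlim := A.tendsto_apply_smul_image_div_pow (LipschitzWith.id (α := 𝔼 n))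
    isCompact_unitCube
  simp only [Set.image_id, normHausdorff_self, unitCube_eq_cubeAt, volume_cubeAt,
    ENNReal.ofReal_one, one_pow, ENNReal.toReal_one, mul_one] at hlim
  have hpow : Tendsto (fun k : ℕ => (2 : ℝ) ^ k) atTop atTop :=
    tendsto_pow_atTop_atTop_of_one_lt one_lt_two
  simpa only [pbfDensity, Function.comp_def, unitCube_eq_cubeAt, pow_mul] using
    (hlim.comp hpow).limsup_eq

end PackingBoundFunction

/-- For `1 ≤ n ≤ d`, a compact `n`-rectifiable subset `C ⊆ ℝ^d` with
`H_n(C) > 0`, and any packing bound function `A`, the limit of `A(rC)/H_n(rC)` as `r → ∞`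
exists and equals `δ_{A,n}` (which depends only on `A` and `n`). -/
theorem packing_bound_limit_rectifiable (n d : ℕ) (hn : 1 ≤ n) (hnd : n ≤ d)
    (C : Set (EuclideanSpace ℝ (Fin d))) (hC : IsCompact C)
    (hrect : ∃ (f : EuclideanSpace ℝ (Fin n) → EuclideanSpace ℝ (Fin d)) (K : NNReal)
      (E : Set (EuclideanSpace ℝ (Fin n))), LipschitzWith K f ∧ IsBounded E ∧
        MeasurableSet E ∧ C = f '' E)
    (hpos : 0 < normHausdorff n d C)
    (A : PackingBoundFunction) :
    Filter.Tendsto (fun r : ℝ => A.toFun d (r • C) / (normHausdorff n d (r • C)).toReal)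
      Filter.atTop (nhds (pbfDensity A n)) := by
  obtain ⟨f, K, E, hf, hE, -, rfl⟩ := hrect
  obtain ⟨S, hS, hSE⟩ := exists_isCompact_image_eq hf.continuous hE hC.isClosed
  rw [← hSE] at hpos ⊢
  have hH : 0 < (normHausdorff n d (f '' S)).toReal :=
    ENNReal.toReal_pos hpos.ne' (normHausdorff_image_ne_top hf hS)
  have hlim := (A.tendsto_apply_smul_image_div_pow hf hS).div_const
    (normHausdorff n d (f '' S)).toReal
  rw [mul_div_cancel_right₀ _ hH.ne', ← A.pbfDensity_eq] at hlim
  refine hlim.congr' ((eventually_gt_atTop 0).mono fun r hr => ?_)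
  simp only [normHausdorff_smul _ hr, ENNReal.toReal_mul,
    ENNReal.toReal_ofReal (pow_nonneg hr.le n), div_div]
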